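/- Let n ≥ 2, 0 < α < 1 and k ≥ 1 be an integer. There exist constants C₀ > 0 depending only on n and k, η ∈ (0,1) depending only on n, k and α, and δ > 0 depending only on n, k and α, such that the following holds. Let Ω ⊂ ℝⁿ be a bounded domain with 0 ∈ ∂Ω, let P be a homogeneous polynomial of degree k−1 with ‖P‖ ≤ 1, and let u ∈ C^{k,α}(0) solve Δu + P = f in Ω∩B₁ and u = g on ∂Ω∩B₁. Assume ‖u‖_{L^∞(Ω∩B₁)} ≤ 1, u(0) = |Du(0)| = ⋯ = |D^k u(0)| = 0, |f(x)| ≤ δ|x|^{k−2+α} for all x ∈ Ω∩B₁, |g(x)| ≤ δ|x|^{k+α} for all x ∈ ∂Ω∩B₁, and ‖∂Ω∩B₁‖_{C^{1,α}(0)} ≤ δ. Then there exists a (k+1)-form Q (a homogeneous polynomial of degree k+1 with Q(x′,0) ≡ 0) such that ‖u − Q‖_{L^∞(Ω∩B_η)} ≤ η^{k+1+α}, ‖Q‖ ≤ C₀, and ΔQ + P ≡ 0. -/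

import Mathlib

open MvPolynomial Metric Set MeasureTheory Bornology

noncomputable section

/-- `ℝⁿ` with the Euclidean norm. -/
abbrev En (n : ℕ) := EuclideanSpace ℝ (Fin n)

variable {n : ℕ}

/-- Evaluation of a multivariate polynomial at a point of `ℝⁿ`. -/
def peval (P : MvPolynomial (Fin n) ℝ) (x : En n) : ℝ :=
  MvPolynomial.eval (fun i => x i) P

/-- Total degree of a monomial (multi-index). -/
def mdeg (d : Fin n →₀ ℕ) : ℕ := d.sum fun _ e => e

/-- `σ!` for a multi-index `σ`. -/
def mfact (d : Fin n →₀ ℕ) : ℕ := d.prod fun _ e => Nat.factorial e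

/-- The norm `‖P‖ = Σ_σ |a_σ|` of a polynomial `P = Σ_σ (a_σ/σ!) x^σ`. -/
def pnorm (P : MvPolynomial (Fin n) ℝ) : ℝ :=
  ∑ d ∈ P.support, (mfact d : ℝ) * |MvPolynomial.coeff d P|

/-- `|D^i P(0)|`, the Euclidean norm of the `i`-th derivative of `P` at `0`. -/
def derivNorm (i : ℕ) (P : MvPolynomial (Fin n) ℝ) : ℝ :=
  Real.sqrt (∑ d ∈ P.support.filter (fun d => mdeg d = i),
    ((mfact d : ℝ) * MvPolynomial.coeff d P) ^ 2)

/-- Polynomial Laplacian. -/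
def plap (P : MvPolynomial (Fin n) ℝ) : MvPolynomial (Fin n) ℝ :=
  ∑ i, MvPolynomial.pderiv i (MvPolynomial.pderiv i P)

/-- The index of the last coordinate. -/
def lastIdx (n : ℕ) [NeZero n] : Fin n :=
  ⟨n - 1, Nat.sub_lt (Nat.pos_of_ne_zero (NeZero.ne n)) Nat.one_pos⟩

variable [NeZero n]

/-- The last coordinate `x_n`. -/
def xn (x : En n) : ℝ := x (lastIdx n)

/-- `|x′|`, the norm of the first `n-1` coordinates. -/
def xpn (x : En n) : ℝ :=
  Real.sqrt (∑ i ∈ Finset.univ.erase (lastIdx n), (x i) ^ 2)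

/-- Substitution of the polynomial `q` for the last variable `x_n`. -/
def substLast (q P : MvPolynomial (Fin n) ℝ) : MvPolynomial (Fin n) ℝ :=
  MvPolynomial.aeval (fun i => if i = lastIdx n then q else MvPolynomial.X i) P

/-- The pointwise Laplacian of `u` at `x` (sum of pure second derivatives). -/
def lapAt (u : En n → ℝ) (x : En n) : ℝ :=
  ∑ i, fderiv ℝ (fderiv ℝ u) x (EuclideanSpace.single i 1) (EuclideanSpace.single i 1)

/-- `u` is a (classical) solution of `Δu = f` in `Ω ∩ B₁`, `u = g` on `∂Ω ∩ B₁`. -/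
def SolvesDirichlet (Ω : Set (En n)) (u f g : En n → ℝ) : Prop :=
  ContinuousOn u (closure Ω ∩ ball 0 1) ∧
  (∀ x ∈ Ω ∩ ball (0 : En n) 1,
    DifferentiableAt ℝ u x ∧ DifferentiableAt ℝ (fderiv ℝ u) x ∧ lapAt u x = f x) ∧
  (∀ x ∈ frontier Ω ∩ ball (0 : En n) 1, u x = g x)

/-- `u` is a (classical) solution of the oblique derivative problem `Δu = f` in `Ω ∩ B₁`,
`β·Du = g` on `∂Ω ∩ B₁`, with `‖β‖_∞ ≤ 1` and `β·e_n ≥ a₀`; `Du` is the (continuous up to the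
boundary) gradient of `u`. -/
def SolvesOblique (Ω : Set (En n)) (u f g : En n → ℝ) (β Du : En n → En n) (a₀ : ℝ) : Prop :=
  ContinuousOn u (closure Ω ∩ ball 0 1) ∧
  ContinuousOn Du (closure Ω ∩ ball 0 1) ∧
  (∀ x ∈ Ω ∩ ball (0 : En n) 1,
    DifferentiableAt ℝ u x ∧ (∀ i, fderiv ℝ u x (EuclideanSpace.single i 1) = Du x i) ∧
    DifferentiableAt ℝ (fderiv ℝ u) x ∧ lapAt u x = f x) ∧
  (∀ x ∈ frontier Ω ∩ ball (0 : En n) 1,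
    (∑ i, β x i * Du x i) = g x ∧ ‖β x‖ ≤ 1 ∧ a₀ ≤ β x (lastIdx n))

/-- `∂Ω ∈ C^{m,α}(0)` with polynomial `P_Ω = P` and constant `K`. -/
def DomainCmα (m : ℕ) (α K : ℝ) (P : MvPolynomial (Fin n) ℝ) (Ω : Set (En n)) : Prop :=
  P.totalDegree ≤ m ∧ MvPolynomial.coeff 0 P = 0 ∧
  MvPolynomial.pderiv (lastIdx n) P = 0 ∧
  (1 ≤ m → ∀ i, MvPolynomial.coeff (Finsupp.single i 1) P = 0) ∧
  (∀ x : En n, ‖x‖ < 1 → xn x > peval P x + K * (xpn x) ^ ((m : ℝ) + α) → x ∈ Ω) ∧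
  (∀ x : En n, ‖x‖ < 1 → xn x < peval P x - K * (xpn x) ^ ((m : ℝ) + α) → x ∉ Ω)

/-- `∂Ω ∈ C^{1,α}(0)` with constant `K` (the degree-one polynomial is necessarily `0`). -/
def Domain1α (α K : ℝ) (Ω : Set (En n)) : Prop :=
  (∀ x : En n, ‖x‖ < 1 → xn x > K * (xpn x) ^ ((1 : ℝ) + α) → x ∈ Ω) ∧
  (∀ x : En n, ‖x‖ < 1 → xn x < -(K * (xpn x) ^ ((1 : ℝ) + α)) → x ∉ Ω)

/-- `[∂Ω∩B₁]_{C^{0,1}(0)} ≤ δ`. -/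
def DomainLip (δ : ℝ) (Ω : Set (En n)) : Prop :=
  (∀ x : En n, ‖x‖ < 1 → xn x > δ * xpn x → x ∈ Ω) ∧
  (∀ x : En n, ‖x‖ < 1 → xn x < -(δ * xpn x) → x ∉ Ω)

/-- `osc_{B₁} ∂Ω ≤ δ`. -/
def FrontierOscLe (Ω : Set (En n)) (δ : ℝ) : Prop :=
  ∀ x ∈ frontier Ω ∩ ball (0 : En n) 1, ∀ y ∈ frontier Ω ∩ ball (0 : En n) 1,
    xn x - xn y ≤ δ

/-- The `L^n` norm of `f` on a set `S ⊆ ℝⁿ`. -/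
def LnNorm (n : ℕ) (S : Set (En n)) (f : En n → ℝ) : ℝ :=
  (∫ x in S, |f x| ^ (n : ℝ)) ^ ((n : ℝ)⁻¹)

/-- `∂Ω` is `C^{m,α}` at the point `x₀` with constants `K, r₀`: after an isometric change of
coordinates `φ` taking `x₀` to `0`, the boundary is trapped between `P_Ω(x′) ± K|x′|^{m+α}`. -/
def BoundaryPtCmα (m : ℕ) (α K r₀ : ℝ) (Ω : Set (En n)) (x₀ : En n) : Prop :=
  ∃ (φ : En n ≃ᵢ En n) (P : MvPolynomial (Fin n) ℝ), φ x₀ = 0 ∧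
    P.totalDegree ≤ m ∧ MvPolynomial.coeff 0 P = 0 ∧
    MvPolynomial.pderiv (lastIdx n) P = 0 ∧
    (1 ≤ m → ∀ i, MvPolynomial.coeff (Finsupp.single i 1) P = 0) ∧
    (∀ y : En n, ‖y‖ < r₀ → xn y > peval P y + K * (xpn y) ^ ((m : ℝ) + α) → φ.symm y ∈ Ω) ∧
    (∀ y : En n, ‖y‖ < r₀ → xn y < peval P y - K * (xpn y) ^ ((m : ℝ) + α) → φ.symm y ∉ Ω)

/-- `∂Ω ∩ B₁ ∈ C^{m,α}`: pointwise `C^{m,α}` with constants uniform on compact subsets. -/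
def BoundaryCmα (m : ℕ) (α : ℝ) (Ω : Set (En n)) : Prop :=
  ∀ S : Set (En n), IsCompact S → S ⊆ frontier Ω ∩ ball (0 : En n) 1 →
    ∃ K r₀ : ℝ, 0 ≤ K ∧ 0 < r₀ ∧ ∀ x₀ ∈ S, BoundaryPtCmα m α K r₀ Ω x₀

/-- `∂Ω ∩ B₁ ∈ C^∞`. -/
def BoundarySmooth (Ω : Set (En n)) : Prop :=
  ∀ m : ℕ, 1 ≤ m → ∀ α : ℝ, 0 < α → α ≤ 1 → BoundaryCmα m α Ω

/-- `u ∈ C^∞(Ω̄ ∩ B₁)`: near every point of `Ω̄ ∩ B₁`, `u` agrees on `Ω` with a globally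
smooth function. -/
def SmoothUpToBoundary (Ω : Set (En n)) (u : En n → ℝ) : Prop :=
  ∀ x₀ ∈ closure Ω ∩ ball (0 : En n) 1, ∃ ε : ℝ, 0 < ε ∧ ∃ v : En n → ℝ,
    ContDiff ℝ (⊤ : ℕ∞) v ∧ ∀ x ∈ Ω ∩ ball x₀ ε, v x = u x

/-!
Subtracting from `u` a form `Q_P` with `ΔQ_P = -P` leaves an almost harmonic function `w` that is
small on an almost flat boundary. On the upper half of the sphere of radius `3/4`, `w` is uniformly
close to a polynomial which is odd in `x_n` (Stone–Weierstrass). The Dirichlet problem in a ball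
with polynomial data has a polynomial solution, so there is a harmonic polynomial `h`, odd in `x_n`,
with these boundary values; the maximum principle makes `w - h` small, the singular right-hand side
`|Δw| ≤ δ|x|^{α-1}` being absorbed by the barrier `δ|x|^{1+α}`.

Since `w` vanishes to order `k + α` at the origin, comparing `h` with `w` at the scale `s ≪ 1` shows
that the homogeneous components of `h` of degree at most `k` are small. The component of degree
`k + 1` is the correction to `Q_P`, and the remainder is controlled by `|x|^{k+2}`.

The parameters `s`, `δ`, `η` must not depend on the constant `Ku` in `|u| ≤ Ku|x|^{k+α}`, so that
constant is first replaced by a universal one: the same approximation, applied to rescalings of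
`u`, shows that any constant above a universal threshold can be halved.
-/

/-! ### Second derivatives along coordinate lines -/

section SecondDerivative

open Filter Topology

/-- `g` is differentiable near `t` and its derivative has derivative `c` at `t`, i.e.
`g''(t) = c`. -/
def HasSecondDerivAt (g : ℝ → ℝ) (c t : ℝ) : Prop :=
  ∃ g' : ℝ → ℝ, (∀ᶠ s in 𝓝 t, HasDerivAt g (g' s) s) ∧ HasDerivAt g' c t

variable {g h : ℝ → ℝ} {c d t : ℝ}

theorem HasSecondDerivAt.add (hg : HasSecondDerivAt g c t) (hh : HasSecondDerivAt h d t) :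
    HasSecondDerivAt (fun s => g s + h s) (c + d) t := by
  obtain ⟨g', hg', hg''⟩ := hg
  obtain ⟨h', hh', hh''⟩ := hh
  refine ⟨fun s => g' s + h' s, ?_, hg''.add hh''⟩
  filter_upwards [hg', hh'] with s hgs hhs using hgs.add hhs

theorem HasSecondDerivAt.const_mul (a : ℝ) (hg : HasSecondDerivAt g c t) :
    HasSecondDerivAt (fun s => a * g s) (a * c) t := by
  obtain ⟨g', hg', hg''⟩ := hg
  refine ⟨fun s => a * g' s, ?_, hg''.const_mul a⟩
  filter_upwards [hg'] with s hgs using hgs.const_mul a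

theorem HasSecondDerivAt.comp_const_mul (R : ℝ) (hg : HasSecondDerivAt g c (R * t)) :
    HasSecondDerivAt (fun s => g (R * s)) (R ^ 2 * c) t := by
  obtain ⟨g', hg', hg''⟩ := hg
  have hasDerivAt_mul (s : ℝ) : HasDerivAt (fun s : ℝ => R * s) R s := by
    simpa using (hasDerivAt_id s).const_mul R
  refine ⟨fun s => g' (R * s) * R, ?_, ?_⟩
  · filter_upwards [(hasDerivAt_mul t).continuousAt.eventually hg'] with s hs
    exact hs.comp s (hasDerivAt_mul s)
  · exact ((hg''.comp t (hasDerivAt_mul t)).mul_const R).congr_deriv (by ring)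

theorem HasSecondDerivAt.nonpos_of_isLocalMax (hg : HasSecondDerivAt g c t)
    (hmax : IsLocalMax g t) : c ≤ 0 := by
  obtain ⟨g', hg', hg''⟩ := hg
  by_contra! hc
  have deriv_eq : deriv g =ᶠ[𝓝 t] g' := by
    filter_upwards [hg'] with s hs using hs.deriv
  have deriv_deriv : deriv (deriv g) t = c := by rw [deriv_eq.deriv_eq, hg''.deriv]
  -- A positive second derivative makes `t` a local minimum too, so `g` is locally constant.
  have hmin : IsLocalMin g t := isLocalMin_of_deriv_deriv_pos (deriv_deriv ▸ hc)
    hmax.deriv_eq_zero hg'.self_of_nhds.continuousAt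
  have g_eq : g =ᶠ[𝓝 t] fun _ => g t := by
    filter_upwards [hmax, hmin] with s hle hge using le_antisymm hle hge
  have : deriv (deriv g) t = 0 := by rw [g_eq.deriv.deriv_eq]; simp
  linarith

end SecondDerivative

section Laplacian

open Filter Topology

variable {n : ℕ} {u v : En n → ℝ} {x : En n} {L M : ℝ}

/-- The sum of the second derivatives of `u` along the coordinate lines through `x` is `L`.
Unlike `lapAt`, this pins the value `L` together with the existence of the derivatives. -/
def HasLaplacianAt (u : En n → ℝ) (L : ℝ) (x : En n) : Prop :=
  ∃ c : Fin n → ℝ, ∑ i, c i = L ∧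
    ∀ i, HasSecondDerivAt (fun t : ℝ => u (x + t • EuclideanSpace.single i 1)) (c i) 0

theorem HasLaplacianAt.add (hu : HasLaplacianAt u L x) (hv : HasLaplacianAt v M x) :
    HasLaplacianAt (fun y => u y + v y) (L + M) x := by
  obtain ⟨c, rfl, hc⟩ := hu
  obtain ⟨d, rfl, hd⟩ := hv
  exact ⟨fun i => c i + d i, Finset.sum_add_distrib, fun i => (hc i).add (hd i)⟩

theorem HasLaplacianAt.const_mul (a : ℝ) (hu : HasLaplacianAt u L x) :
    HasLaplacianAt (fun y => a * u y) (a * L) x := by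
  obtain ⟨c, rfl, hc⟩ := hu
  exact ⟨fun i => a * c i, by rw [Finset.mul_sum], fun i => (hc i).const_mul a⟩

theorem HasLaplacianAt.neg (hu : HasLaplacianAt u L x) :
    HasLaplacianAt (fun y => -u y) (-L) x := by
  simpa using hu.const_mul (-1)

theorem HasLaplacianAt.sub (hu : HasLaplacianAt u L x) (hv : HasLaplacianAt v M x) :
    HasLaplacianAt (fun y => u y - v y) (L - M) x := by
  simpa [sub_eq_add_neg] using hu.add hv.neg

theorem HasLaplacianAt.comp_const_smul (R : ℝ) (hu : HasLaplacianAt u L (R • x)) :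
    HasLaplacianAt (fun y => u (R • y)) (R ^ 2 * L) x := by
  obtain ⟨c, rfl, hc⟩ := hu
  refine ⟨fun i => R ^ 2 * c i, by rw [Finset.mul_sum], fun i => ?_⟩
  have := HasSecondDerivAt.comp_const_mul (t := 0) R (by simpa using hc i)
  simpa [smul_add, smul_smul] using this

theorem hasDerivAt_add_smul (x v : En n) (t : ℝ) : HasDerivAt (fun t : ℝ => x + t • v) v t := by
  simpa using ((hasDerivAt_id t).smul_const v).const_add x

theorem eventually_add_smul_mem {V : Set (En n)} (hV : IsOpen V) (hx : x ∈ V) (v : En n) :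
    ∀ᶠ t in 𝓝 (0 : ℝ), x + t • v ∈ V :=
  (hasDerivAt_add_smul x v 0).continuousAt.eventually_mem (by simpa using hV.mem_nhds hx)

theorem hasLaplacianAt_lapAt {Ω : Set (En n)} (hΩ : IsOpen Ω) (hx : x ∈ Ω)
    (hu : ∀ y ∈ Ω, DifferentiableAt ℝ u y) (hu' : DifferentiableAt ℝ (fderiv ℝ u) x) :
    HasLaplacianAt u (lapAt u x) x := by
  refine ⟨_, rfl, fun i => ⟨fun t => fderiv ℝ u (x + t • EuclideanSpace.single i 1)
    (EuclideanSpace.single i 1), ?_, ?_⟩⟩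
  · filter_upwards [eventually_add_smul_mem hΩ hx (EuclideanSpace.single i 1)] with t ht
    exact (hu _ ht).hasFDerivAt.comp_hasDerivAt t (hasDerivAt_add_smul x _ t)
  · have hfderiv : HasFDerivAt (fderiv ℝ u) (fderiv ℝ (fderiv ℝ u) x)
        (x + (0 : ℝ) • EuclideanSpace.single i 1) := by simpa using hu'.hasFDerivAt
    have hline := hfderiv.comp_hasDerivAt (0 : ℝ) (hasDerivAt_add_smul x _ 0)
    exact (ContinuousLinearMap.apply ℝ ℝ (EuclideanSpace.single i (1 : ℝ))).hasFDerivAt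
      |>.comp_hasDerivAt (0 : ℝ) hline

end Laplacian

/-! ### Polynomials as functions -/

section PolynomialEvaluation

variable {n : ℕ} (p q : MvPolynomial (Fin n) ℝ) (x : En n)

@[simp]
theorem peval_add : peval (p + q) x = peval p x + peval q x := map_add _ _ _

@[simp]
theorem peval_sub : peval (p - q) x = peval p x - peval q x := map_sub _ _ _

@[simp]
theorem peval_neg : peval (-p) x = -peval p x := map_neg _ _

@[simp]
theorem peval_mul : peval (p * q) x = peval p x * peval q x := map_mul _ _ _

@[simp]
theorem peval_pow (m : ℕ) : peval (p ^ m) x = peval p x ^ m := map_pow _ _ _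

@[simp]
theorem peval_zero : peval (0 : MvPolynomial (Fin n) ℝ) x = 0 := map_zero _

@[simp]
theorem peval_C (a : ℝ) : peval (C a) x = a := eval_C _

@[simp]
theorem peval_X (i : Fin n) : peval (X i) x = x i := eval_X _

@[simp]
theorem peval_ofNat (m : ℕ) [m.AtLeastTwo] :
    peval (ofNat(m) : MvPolynomial (Fin n) ℝ) x = ofNat(m) := map_ofNat _ _

@[simp]
theorem peval_sum {ι : Type*} (s : Finset ι) (f : ι → MvPolynomial (Fin n) ℝ) :
    peval (∑ j ∈ s, f j) x = ∑ j ∈ s, peval (f j) x := map_sum _ _ _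

theorem peval_eq_sum : peval p x = ∑ d ∈ p.support, coeff d p * ∏ i, x i ^ d i := eval_eq' _ _

theorem continuous_peval : Continuous (peval p) :=
  (MvPolynomial.continuous_eval p).comp (by fun_prop)

theorem hasDerivAt_peval_add_smul (v : En n) (t : ℝ) :
    HasDerivAt (fun t : ℝ => peval p (x + t • v))
      (∑ i, v i * peval (pderiv i p) (x + t • v)) t := by
  induction p using MvPolynomial.induction_on with
  | C a => simpa using hasDerivAt_const t a
  | add p q hp hq =>
    simp only [peval_add, map_add, mul_add, Finset.sum_add_distrib]
    exact hp.add hq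
  | mul_X p j hp =>
    have hcoord : HasDerivAt (fun t : ℝ => (x + t • v) j) (v j) t := by
      simpa using ((hasDerivAt_id t).mul_const (v j)).const_add (x j)
    simp only [peval_mul, peval_X, pderiv_mul, peval_add, pderiv_X]
    refine (hp.mul hcoord).congr_deriv ?_
    rw [Finset.sum_mul]
    simp only [mul_add, Finset.sum_add_distrib]
    congr 1
    · exact Finset.sum_congr rfl fun i _ => by ring
    · rw [Finset.sum_eq_single j (fun i _ hij => by simp [hij.symm]) (by simp)]
      simp only [Pi.single_eq_same, show (1 : MvPolynomial (Fin n) ℝ) = C 1 from rfl, peval_C]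
      ring

theorem hasDerivAt_peval_add_smul_single (i : Fin n) (t : ℝ) :
    HasDerivAt (fun t : ℝ => peval p (x + t • EuclideanSpace.single i 1))
      (peval (pderiv i p) (x + t • EuclideanSpace.single i 1)) t := by
  simpa [PiLp.single_apply] using
    hasDerivAt_peval_add_smul p x (EuclideanSpace.single i 1) t

theorem hasLaplacianAt_peval : HasLaplacianAt (peval p) (peval (plap p) x) x :=
  ⟨fun i => peval (pderiv i (pderiv i p)) x, by simp [plap], fun i =>
    ⟨_, .of_forall fun t => hasDerivAt_peval_add_smul_single p x i t, by
      simpa using hasDerivAt_peval_add_smul_single (pderiv i p) x i 0⟩⟩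

end PolynomialEvaluation

/-! ### The polynomial Laplacian -/

section PolynomialLaplacian

variable {n : ℕ} (p q : MvPolynomial (Fin n) ℝ)

theorem plap_add : plap (p + q) = plap p + plap q := by
  simp only [plap, map_add, Finset.sum_add_distrib]

theorem plap_sub : plap (p - q) = plap p - plap q := by
  simp only [plap, map_sub, Finset.sum_sub_distrib]

theorem plap_C_mul (a : ℝ) : plap (C a * q) = C a * plap q := by
  simp only [plap, pderiv_C_mul, Finset.mul_sum]

theorem plap_neg : plap (-p) = -plap p := by
  simp [plap]

@[simp]
theorem plap_C (a : ℝ) : plap (C a : MvPolynomial (Fin n) ℝ) = 0 := by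
  simp [plap]

@[simp]
theorem plap_X (i : Fin n) : plap (X i : MvPolynomial (Fin n) ℝ) = 0 := by
  refine Finset.sum_eq_zero fun j _ => ?_
  rw [pderiv_X, Pi.single_apply]
  split_ifs <;> simp

theorem plap_sum {ι : Type*} (s : Finset ι) (f : ι → MvPolynomial (Fin n) ℝ) :
    plap (∑ j ∈ s, f j) = ∑ j ∈ s, plap (f j) := by
  simp only [plap, map_sum]
  exact Finset.sum_comm

theorem plap_mul :
    plap (p * q) = plap p * q + 2 * (∑ i, pderiv i p * pderiv i q) + p * plap q := by
  simp only [plap, pderiv_mul, map_add, Finset.mul_sum, Finset.sum_mul,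
    ← Finset.sum_add_distrib]
  exact Finset.sum_congr rfl fun i _ => by ring

theorem plap_mul_self (hp : plap p = 0) : plap (p * p) = 2 * ∑ i, pderiv i p ^ 2 := by
  simp [plap_mul, hp, sq]

theorem pderiv_pderiv_comm (i j : Fin n) : pderiv i (pderiv j p) = pderiv j (pderiv i p) := by
  ext d
  simp only [coeff_pderiv]
  rw [add_right_comm]
  rcases eq_or_ne i j with rfl | h
  · rfl
  · simp only [Finsupp.coe_add, Pi.add_apply, Finsupp.single_apply, h, h.symm, if_false, add_zero]
    ring

theorem plap_pderiv (j : Fin n) : plap (pderiv j p) = pderiv j (plap p) := by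
  simp only [plap, map_sum]
  refine Finset.sum_congr rfl fun i _ => ?_
  rw [pderiv_pderiv_comm p i j, pderiv_pderiv_comm _ i j]

/-- The polynomial `|x|²`. -/
def normSqPoly : MvPolynomial (Fin n) ℝ := ∑ i, X i ^ 2

@[simp]
theorem peval_normSqPoly (x : En n) : peval normSqPoly x = ‖x‖ ^ 2 := by
  simp [normSqPoly, EuclideanSpace.norm_sq_eq]

theorem pderiv_normSqPoly (i : Fin n) :
    pderiv i (normSqPoly : MvPolynomial (Fin n) ℝ) = 2 * X i := by
  simp only [normSqPoly, map_sum, Derivation.leibniz_pow, pderiv_X]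
  rw [Finset.sum_eq_single i (fun j _ hj => by simp [hj.symm]) (by simp)]
  simp

theorem plap_normSqPoly : plap (normSqPoly : MvPolynomial (Fin n) ℝ) = C (2 * (n : ℝ)) := by
  have hpp (i : Fin n) : pderiv i (pderiv i (normSqPoly : MvPolynomial (Fin n) ℝ)) = C 2 := by
    rw [pderiv_normSqPoly, ← map_ofNat C 2, pderiv_C_mul, pderiv_X_self, mul_one]
  simp only [plap, hpp, Finset.sum_const, Finset.card_univ, Fintype.card_fin]
  simp [mul_comm]

end PolynomialLaplacian

/-! ### The maximum principle -/

section MaximumPrinciple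

variable {n : ℕ} {V : Set (En n)} {w : En n → ℝ} {m : ℝ}

theorem HasLaplacianAt.nonpos_of_isMaxOn {L : ℝ} {x : En n} (hL : HasLaplacianAt w L x)
    (hV : IsOpen V) (hx : x ∈ V) (hmax : IsMaxOn w V x) : L ≤ 0 := by
  obtain ⟨c, rfl, hc⟩ := hL
  refine Finset.sum_nonpos fun i _ => (hc i).nonpos_of_isLocalMax ?_
  filter_upwards [eventually_add_smul_mem hV hx (EuclideanSpace.single i 1)] with t ht
  simpa using hmax ht

theorem le_of_le_frontier_of_pos_laplacian (hV : IsOpen V) (hVb : IsBounded V)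
    (hw : ContinuousOn w (closure V)) (hL : ∀ x ∈ V, ∃ L, 0 < L ∧ HasLaplacianAt w L x)
    (hm : ∀ x ∈ frontier V, w x ≤ m) : ∀ x ∈ V, w x ≤ m := by
  intro x hx
  obtain ⟨z, hz, hzmax⟩ := hVb.isCompact_closure.exists_isMaxOn ⟨x, subset_closure hx⟩ hw
  have hzV : z ∉ V := fun hzV => by
    obtain ⟨L, hL0, hLz⟩ := hL z hzV
    exact hL0.not_ge (hLz.nonpos_of_isMaxOn hV hzV (hzmax.on_subset subset_closure))
  have hzf : z ∈ frontier V := by rw [hV.frontier_eq]; exact ⟨hz, hzV⟩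
  exact (hzmax (subset_closure hx)).trans (hm z hzf)

variable [NeZero n]

theorem le_of_le_frontier_of_nonneg_laplacian (hV : IsOpen V) (hVb : IsBounded V)
    (hw : ContinuousOn w (closure V)) (hL : ∀ x ∈ V, ∃ L, 0 ≤ L ∧ HasLaplacianAt w L x)
    (hm : ∀ x ∈ frontier V, w x ≤ m) : ∀ x ∈ V, w x ≤ m := by
  intro x hx
  obtain ⟨R, hR⟩ := hVb.closure.exists_norm_le
  have perturbed (ε : ℝ) (hε : 0 < ε) : w x + ε * ‖x‖ ^ 2 ≤ m + ε * R ^ 2 := by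
    refine le_of_le_frontier_of_pos_laplacian (w := fun y => w y + ε * ‖y‖ ^ 2) hV hVb
      (hw.add (by fun_prop)) (fun y hy => ?_) (fun y hy => ?_) x hx
    · obtain ⟨L, hL0, hLy⟩ := hL y hy
      have hsq := (hasLaplacianAt_peval normSqPoly y).const_mul ε
      simp only [peval_normSqPoly, plap_normSqPoly, peval_C] at hsq
      have hn : (0 : ℝ) < n := by exact_mod_cast Nat.pos_of_neZero n
      exact ⟨_, by positivity, hLy.add hsq⟩
    · have := hR y (frontier_subset_closure hy)
      gcongr
      exact hm y hy
  refine le_of_forall_pos_le_add fun e he => ?_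
  have := perturbed (e / (R ^ 2 + 1)) (by positivity)
  have hε : e / (R ^ 2 + 1) * R ^ 2 ≤ e := by
    rw [div_mul_eq_mul_div, div_le_iff₀ (by positivity)]; nlinarith
  have : 0 ≤ e / (R ^ 2 + 1) * ‖x‖ ^ 2 := by positivity
  linarith

theorem peval_le_of_le_sphere {p : MvPolynomial (Fin n) ℝ} {r : ℝ}
    (hp : ∀ x : En n, ‖x‖ < r → 0 ≤ peval (plap p) x)
    (hm : ∀ x : En n, ‖x‖ = r → peval p x ≤ m) {x : En n} (hx : ‖x‖ ≤ r) : peval p x ≤ m := by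
  rcases hx.lt_or_eq with hx | hx
  · refine le_of_le_frontier_of_nonneg_laplacian (V := ball 0 r) isOpen_ball isBounded_ball
      (continuous_peval p).continuousOn
      (fun y hy => ⟨_, hp y (by simpa using hy), hasLaplacianAt_peval p y⟩)
      (fun y hy => hm y (by simpa using frontier_ball_subset_sphere hy)) x (by simpa using hx)
  · exact hm x hx

theorem abs_peval_le_of_abs_le_sphere {p : MvPolynomial (Fin n) ℝ} (hp : plap p = 0) {r : ℝ}
    (hm : ∀ x : En n, ‖x‖ = r → |peval p x| ≤ m) {x : En n} (hx : ‖x‖ ≤ r) :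
    |peval p x| ≤ m := by
  have hneg : plap (-p) = 0 := by rw [plap_neg, hp, neg_zero]
  refine abs_le'.2 ⟨peval_le_of_le_sphere (by simp [hp]) (fun y hy => (abs_le'.1 (hm y hy)).1) hx,
    ?_⟩
  rw [← peval_neg]
  exact peval_le_of_le_sphere (by simp [hneg])
    (fun y hy => by simpa using (abs_le'.1 (hm y hy)).2) hx

end MaximumPrinciple

/-! ### A barrier for singular right-hand sides -/

section Barrier

variable {n : ℕ}

open Filter Topology

theorem norm_add_smul_single_sq (x : En n) (i : Fin n) (t : ℝ) :
    ‖x + t • EuclideanSpace.single i (1 : ℝ)‖ ^ 2 = ‖x‖ ^ 2 + 2 * x i * t + t ^ 2 := by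
  rw [norm_add_sq_real, inner_smul_right, EuclideanSpace.inner_single_right, norm_smul]
  simp only [Real.ringHom_apply, one_mul, Real.norm_eq_abs, PiLp.norm_single, norm_one, mul_one,
    sq_abs, add_left_inj, add_right_inj]
  ring

theorem hasSecondDerivAt_quadratic_rpow {a : ℝ} (ha : 0 < a) (b p : ℝ) :
    HasSecondDerivAt (fun t => (a + 2 * b * t + t ^ 2) ^ p)
      (p * (p - 1) * a ^ (p - 2) * (4 * b ^ 2) + 2 * p * a ^ (p - 1)) 0 := by
  have hquad (t : ℝ) : HasDerivAt (fun t : ℝ => a + 2 * b * t + t ^ 2) (2 * b + 2 * t) t := by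
    have hlin : HasDerivAt (fun t : ℝ => 2 * b * t) (2 * b) t := by
      simpa using (hasDerivAt_id t).const_mul (2 * b)
    have hsq : HasDerivAt (fun t : ℝ => t ^ 2) (2 * t) t := by simpa using hasDerivAt_pow 2 t
    exact (hlin.const_add a).add hsq
  refine ⟨fun t => (2 * b + 2 * t) * p * (a + 2 * b * t + t ^ 2) ^ (p - 1), ?_, ?_⟩
  · have hpos : ∀ᶠ t in 𝓝 (0 : ℝ), 0 < a + 2 * b * t + t ^ 2 :=
      (hquad 0).continuousAt.eventually_const_lt (by simpa using ha)
    filter_upwards [hpos] with t ht using (hquad t).rpow_const (Or.inl ht.ne')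
  · have hlin : HasDerivAt (fun t : ℝ => (2 * b + 2 * t) * p) (2 * p) 0 := by
      simpa using (((hasDerivAt_id (0 : ℝ)).const_mul 2).const_add (2 * b)).mul_const p
    have hpow := (hquad 0).rpow_const (p := p - 1) (Or.inl (by simpa using ha.ne'))
    refine (hlin.mul hpow).congr_deriv ?_
    simp only [mul_zero, add_zero, ne_eq, OfNat.ofNat_ne_zero, not_false_eq_true, zero_pow,
      show p - 1 - 1 = p - 2 by ring]
    ring

theorem sq_rpow_half {r : ℝ} (hr : 0 ≤ r) (s : ℝ) : (r ^ 2) ^ (s / 2) = r ^ s := by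
  rw [← Real.rpow_natCast, ← Real.rpow_mul hr]
  congr 1
  push_cast
  ring

theorem hasLaplacianAt_norm_rpow (s : ℝ) {x : En n} (hx : x ≠ 0) :
    HasLaplacianAt (fun y => ‖y‖ ^ s) (s * (s + n - 2) * ‖x‖ ^ (s - 2)) x := by
  have ha : 0 < ‖x‖ ^ 2 := by positivity
  refine ⟨fun i => s / 2 * (s / 2 - 1) * (‖x‖ ^ 2) ^ (s / 2 - 2) * (4 * x i ^ 2)
    + 2 * (s / 2) * (‖x‖ ^ 2) ^ (s / 2 - 1), ?_, fun i => ?_⟩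
  · have hpow : (‖x‖ ^ 2) ^ (s / 2 - 1) = ‖x‖ ^ (s - 2) := by
      rw [← sq_rpow_half (norm_nonneg x)]; congr 1; ring
    have hpow' : (‖x‖ ^ 2) ^ (s / 2 - 2) * ‖x‖ ^ 2 = ‖x‖ ^ (s - 2) := by
      rw [← Real.rpow_add_one ha.ne', ← hpow]; congr 1; ring
    rw [Finset.sum_add_distrib, ← Finset.mul_sum, ← Finset.mul_sum,
      ← EuclideanSpace.real_norm_sq_eq, hpow]
    simp only [Finset.sum_const, Finset.card_univ, Fintype.card_fin, nsmul_eq_mul]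
    linear_combination (s * (s - 2)) * hpow'
  · have := hasSecondDerivAt_quadratic_rpow ha (x i) (s / 2)
    simpa only [← norm_add_smul_single_sq, sq_rpow_half (norm_nonneg _)] using this

theorem exists_le_hasLaplacianAt_norm_rpow (hn : 2 ≤ n) {α : ℝ} (hα : 0 < α) {x : En n}
    (hx : x ≠ 0) : ∃ L, ‖x‖ ^ (α - 1) ≤ L ∧ HasLaplacianAt (fun y => ‖y‖ ^ (1 + α)) L x := by
  refine ⟨_, ?_, hasLaplacianAt_norm_rpow (1 + α) hx⟩
  have hn' : (2 : ℝ) ≤ n := by exact_mod_cast hn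
  rw [show 1 + α - 2 = α - 1 by ring]
  exact le_mul_of_one_le_left (by positivity) (by nlinarith)

theorem le_add_of_le_frontier_of_laplacian_ge (hn : 2 ≤ n) {α : ℝ} (hα : 0 < α)
    {V : Set (En n)} (hV : IsOpen V) (hV1 : V ⊆ ball 0 1) (h0 : (0 : En n) ∉ V) {w : En n → ℝ}
    (hw : ContinuousOn w (closure V)) {δ : ℝ} (hδ : 0 ≤ δ)
    (hL : ∀ x ∈ V, ∃ L, -(δ * ‖x‖ ^ (α - 1)) ≤ L ∧ HasLaplacianAt w L x) {m : ℝ}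
    (hm : ∀ x ∈ frontier V, w x ≤ m) {x : En n} (hx : x ∈ V) : w x ≤ m + δ := by
  have : NeZero n := ⟨by omega⟩
  have hcont : Continuous fun y : En n => δ * ‖y‖ ^ (1 + α) :=
    continuous_const.mul (continuous_norm.rpow_const fun _ => Or.inr (by positivity))
  have hle : w x + δ * ‖x‖ ^ (1 + α) ≤ m + δ := by
    refine le_of_le_frontier_of_nonneg_laplacian (w := fun y => w y + δ * ‖y‖ ^ (1 + α)) hV
      (isBounded_ball.subset hV1) (hw.add hcont.continuousOn) (fun y hy => ?_) (fun y hy => ?_) x hx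
    · obtain ⟨L, hL1, hL2⟩ := hL y hy
      obtain ⟨M, hM1, hM2⟩ := exists_le_hasLaplacianAt_norm_rpow hn hα (ne_of_mem_of_not_mem hy h0)
      exact ⟨_, by nlinarith [mul_le_mul_of_nonneg_left hM1 hδ], hL2.add (hM2.const_mul δ)⟩
    · have hy1 : ‖y‖ ≤ 1 := by
        simpa using closure_ball_subset_closedBall
          (closure_mono hV1 (frontier_subset_closure hy))
      have : ‖y‖ ^ (1 + α) ≤ 1 := Real.rpow_le_one (norm_nonneg y) hy1 (by positivity)
      have := hm y hy
      nlinarith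
  have : 0 ≤ δ * ‖x‖ ^ (1 + α) := by positivity
  linarith

end Barrier

/-! ### Interior estimates for harmonic polynomials -/

section Bernstein

variable {n : ℕ}

/-- The polynomial `r² - |x|²`, which vanishes on the sphere of radius `r`. -/
def spherePoly (r : ℝ) : MvPolynomial (Fin n) ℝ := C (r ^ 2) - normSqPoly

@[simp]
theorem peval_spherePoly (r : ℝ) (x : En n) : peval (spherePoly r) x = r ^ 2 - ‖x‖ ^ 2 := by
  simp [spherePoly]

theorem pderiv_spherePoly (r : ℝ) (i : Fin n) :
    pderiv i (spherePoly r : MvPolynomial (Fin n) ℝ) = -(2 * X i) := by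
  simp [spherePoly, pderiv_normSqPoly]

theorem plap_spherePoly (r : ℝ) :
    plap (spherePoly r : MvPolynomial (Fin n) ℝ) = -C (2 * (n : ℝ)) := by
  rw [spherePoly, plap_sub, plap_normSqPoly]
  simp [plap]

theorem peval_plap_spherePoly_mul_sq {v : MvPolynomial (Fin n) ℝ} (hv : plap v = 0) (r : ℝ)
    (x : En n) :
    peval (plap (spherePoly r * v * (spherePoly r * v))) x
      = 2 * ∑ i, (-(2 * x i) * peval v x + (r ^ 2 - ‖x‖ ^ 2) * peval (pderiv i v) x) ^ 2
        - 8 * ((r ^ 2 - ‖x‖ ^ 2) * peval v x * ∑ i, x i * peval (pderiv i v) x)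
        - 4 * n * ((r ^ 2 - ‖x‖ ^ 2) * peval v x ^ 2) := by
  have hlap : peval (plap (spherePoly r * v)) x
      = -(2 * n) * peval v x - 4 * ∑ i, x i * peval (pderiv i v) x := by
    simp only [plap_mul, hv, plap_spherePoly, pderiv_spherePoly, peval_add, peval_mul, peval_neg,
      peval_sum, peval_C, peval_X, peval_ofNat, peval_zero, mul_assoc, neg_mul,
      Finset.sum_neg_distrib, ← Finset.mul_sum]
    ring
  rw [plap_mul (spherePoly r * v)]
  simp only [peval_add, peval_mul, hlap, peval_sum, peval_ofNat, pderiv_mul, pderiv_spherePoly,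
    peval_neg, peval_X, peval_spherePoly]
  simp only [← sq]
  ring

theorem neg_sum_sq_le_sum_sq_sub (s V : ℝ) (x y : Fin n → ℝ) :
    -(32 * V ^ 2 * ∑ i, x i ^ 2)
      ≤ 2 * ∑ i, (-(2 * x i) * V + s * y i) ^ 2 - 8 * (s * V * ∑ i, x i * y i) := by
  simp only [Finset.mul_sum, ← Finset.sum_sub_distrib, ← Finset.sum_neg_distrib]
  exact Finset.sum_le_sum fun i _ => by nlinarith [sq_nonneg (s * y i - 4 * (x i * V))]

/-- Bernstein's auxiliary function for the derivative `∂ⱼ h` on the ball of radius `r`. The weight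
of `h²` is chosen so that the function is subharmonic when `h` is harmonic. -/
def bernsteinPoly (r : ℝ) (h : MvPolynomial (Fin n) ℝ) (j : Fin n) : MvPolynomial (Fin n) ℝ :=
  spherePoly r * pderiv j h * (spherePoly r * pderiv j h) + C ((2 * n + 16) * r ^ 2) * (h * h)

theorem peval_bernsteinPoly (r : ℝ) (h : MvPolynomial (Fin n) ℝ) (j : Fin n) (x : En n) :
    peval (bernsteinPoly r h j) x = (r ^ 2 - ‖x‖ ^ 2) ^ 2 * peval (pderiv j h) x ^ 2
      + (2 * n + 16) * r ^ 2 * peval h x ^ 2 := by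
  simp only [bernsteinPoly, peval_add, peval_mul, peval_spherePoly, peval_C]
  ring

theorem peval_plap_bernsteinPoly_nonneg {r : ℝ} {h : MvPolynomial (Fin n) ℝ} (hh : plap h = 0)
    (j : Fin n) {x : En n} (hx : ‖x‖ < r) : 0 ≤ peval (plap (bernsteinPoly r h j)) x := by
  have hv : plap (pderiv j h) = 0 := by rw [plap_pderiv, hh, map_zero]
  rw [bernsteinPoly, plap_add, plap_C_mul, plap_mul_self h hh, peval_add,
    peval_plap_spherePoly_mul_sq hv, peval_mul, peval_C, peval_mul, peval_sum, peval_ofNat]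
  simp only [peval_pow]
  set V := peval (pderiv j h) x
  have hcross := neg_sum_sq_le_sum_sq_sub (r ^ 2 - ‖x‖ ^ 2) V (fun i => x i)
    (fun i => peval (pderiv i (pderiv j h)) x)
  rw [← EuclideanSpace.real_norm_sq_eq] at hcross
  have hxr : ‖x‖ ^ 2 ≤ r ^ 2 := by gcongr
  have hgrad : V ^ 2 ≤ ∑ i, peval (pderiv i h) x ^ 2 :=
    Finset.single_le_sum (f := fun i => peval (pderiv i h) x ^ 2) (fun _ _ => sq_nonneg _)
      (Finset.mem_univ j)
  have hgrad' := mul_le_mul_of_nonneg_left hgrad (by positivity : 0 ≤ (2 * n + 16) * r ^ 2)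
  have hnorm := mul_le_mul_of_nonneg_left hxr (by positivity : 0 ≤ V ^ 2)
  have : 0 ≤ (n : ℝ) * (‖x‖ ^ 2 * V ^ 2) := by positivity
  linarith

theorem abs_peval_pderiv_le [NeZero n] {r M : ℝ} (hr : 0 < r) (hM : 0 ≤ M)
    {h : MvPolynomial (Fin n) ℝ} (hh : plap h = 0)
    (hb : ∀ x : En n, ‖x‖ ≤ r → |peval h x| ≤ M) (j : Fin n) {x : En n} (hx : ‖x‖ ≤ r / 2) :
    |peval (pderiv j h) x| ≤ (2 * n + 16) * M / r := by
  have hmax : peval (bernsteinPoly r h j) x ≤ (2 * n + 16) * r ^ 2 * M ^ 2 := by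
    refine peval_le_of_le_sphere (fun y hy => peval_plap_bernsteinPoly_nonneg hh j hy)
      (fun y hy => ?_) (hx.trans (by linarith))
    rw [peval_bernsteinPoly, hy, sub_self, zero_pow two_ne_zero, zero_mul, zero_add]
    exact mul_le_mul_of_nonneg_left (sq_le_sq.2 ((hb y hy.le).trans (le_abs_self M)))
      (by positivity)
  rw [peval_bernsteinPoly] at hmax
  have hweight : (3 / 4 * r ^ 2) ^ 2 ≤ (r ^ 2 - ‖x‖ ^ 2) ^ 2 := by
    gcongr
    nlinarith [norm_nonneg x]
  have hV : (3 / 4 * r ^ 2) ^ 2 * peval (pderiv j h) x ^ 2 ≤ (2 * n + 16) * r ^ 2 * M ^ 2 := by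
    have := mul_le_mul_of_nonneg_right hweight (sq_nonneg (peval (pderiv j h) x))
    have : 0 ≤ (2 * n + 16) * r ^ 2 * peval h x ^ 2 := by positivity
    linarith
  refine abs_le_of_sq_le_sq ?_ (by positivity)
  rw [div_pow, le_div_iff₀ (by positivity)]
  have hcancel : r ^ 2 * (9 / 16 * (peval (pderiv j h) x ^ 2 * r ^ 2))
      ≤ r ^ 2 * ((2 * n + 16) * M ^ 2) := by linarith
  have := le_of_mul_le_mul_left hcancel (by positivity)
  have : (0 : ℝ) ≤ n := by positivity
  nlinarith [sq_nonneg M]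

end Bernstein

section Taylor

variable {n : ℕ}

theorem mfact_eq_prod (d : Fin n →₀ ℕ) : mfact d = ∏ i, (d i).factorial :=
  Finsupp.prod_fintype _ _ (by simp)

theorem one_le_mfact (d : Fin n →₀ ℕ) : (1 : ℝ) ≤ mfact d := by
  rw [mfact_eq_prod]
  exact_mod_cast Finset.one_le_prod' fun i _ => Nat.factorial_pos _

theorem mfact_add_single (d : Fin n →₀ ℕ) (i : Fin n) :
    mfact (d + Finsupp.single i 1) = (d i + 1) * mfact d := by
  classical
  rw [mfact_eq_prod, mfact_eq_prod, ← Finset.mul_prod_erase _ _ (Finset.mem_univ i),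
    ← Finset.mul_prod_erase Finset.univ (fun j => (d j).factorial) (Finset.mem_univ i),
    ← mul_assoc]
  congr 1
  · simp [Nat.factorial_succ]
  · refine Finset.prod_congr rfl fun j hj => ?_
    simp [(Finset.ne_of_mem_erase hj).symm]

theorem peval_apply_zero (p : MvPolynomial (Fin n) ℝ) : peval p 0 = coeff 0 p := by
  rw [← constantCoeff_eq, ← eval_zero]
  rfl

theorem pderiv_homogeneousComponent_succ (i : Fin n) (j : ℕ) (h : MvPolynomial (Fin n) ℝ) :
    pderiv i (homogeneousComponent (j + 1) h) = homogeneousComponent j (pderiv i h) := by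
  ext d
  simp only [coeff_pderiv, coeff_homogeneousComponent, map_add, Finsupp.degree_single,
    Nat.add_right_cancel_iff, ite_mul, zero_mul]

theorem pderiv_homogeneousComponent_zero (i : Fin n) (h : MvPolynomial (Fin n) ℝ) :
    pderiv i (homogeneousComponent 0 h) = 0 := by
  rw [homogeneousComponent_zero, pderiv_C]

theorem plap_homogeneousComponent (j : ℕ) {h : MvPolynomial (Fin n) ℝ} (hh : plap h = 0) :
    plap (homogeneousComponent j h) = 0 := by
  rcases j with _ | _ | j
  · simp [plap]
  · simp [plap, pderiv_homogeneousComponent_succ]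
  · simp only [plap, pderiv_homogeneousComponent_succ]
    rw [← map_sum, ← plap, hh, map_zero]

/-- The Taylor polynomial of `h` at `0`, consisting of the terms of degree less than `m`. -/
def taylorPoly (m : ℕ) (h : MvPolynomial (Fin n) ℝ) : MvPolynomial (Fin n) ℝ :=
  ∑ j ∈ Finset.range m, homogeneousComponent j h

theorem pderiv_taylorPoly_succ (i : Fin n) (m : ℕ) (h : MvPolynomial (Fin n) ℝ) :
    pderiv i (taylorPoly (m + 1) h) = taylorPoly m (pderiv i h) := by
  rw [taylorPoly, Finset.sum_range_succ', map_add, pderiv_homogeneousComponent_zero, map_sum,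
    add_zero]
  simp only [pderiv_homogeneousComponent_succ, taylorPoly]

theorem peval_sub_taylorPoly_apply_zero (m : ℕ) (h : MvPolynomial (Fin n) ℝ) :
    peval (h - taylorPoly (m + 1) h) 0 = 0 := by
  rw [peval_apply_zero, coeff_sub, taylorPoly, Finset.sum_range_succ', coeff_add, coeff_sum]
  simp [coeff_homogeneousComponent]

theorem abs_peval_sub_peval_zero_le (p : MvPolynomial (Fin n) ℝ) (x : En n) {B : ℝ}
    (hB : ∀ i, ∀ y : En n, ‖y‖ ≤ ‖x‖ → |peval (pderiv i p) y| ≤ B) :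
    |peval p x - peval p 0| ≤ n * (‖x‖ * B) := by
  have hderiv (t : ℝ) (ht : t ∈ Icc (0 : ℝ) 1) :
      ‖∑ i, x i * peval (pderiv i p) ((0 : En n) + t • x)‖ ≤ n * (‖x‖ * B) := by
    have hnorm : ‖(0 : En n) + t • x‖ ≤ ‖x‖ := by
      rw [zero_add, norm_smul, Real.norm_eq_abs, abs_of_nonneg ht.1]
      exact mul_le_of_le_one_left (norm_nonneg x) ht.2
    have hterm (i : Fin n) : ‖x i * peval (pderiv i p) ((0 : En n) + t • x)‖ ≤ ‖x‖ * B := by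
      rw [norm_mul]
      exact mul_le_mul (PiLp.norm_apply_le x i) (hB i _ hnorm) (abs_nonneg _) (norm_nonneg _)
    exact (norm_sum_le_of_le _ fun i _ => hterm i).trans (by simp)
  simpa using Convex.norm_image_sub_le_of_norm_hasDerivWithin_le
    (f := fun t : ℝ => peval p ((0 : En n) + t • x)) (s := Icc (0 : ℝ) 1) (x := 0) (y := 1)
    (fun t _ => (hasDerivAt_peval_add_smul p 0 x t).hasDerivWithinAt) hderiv (convex_Icc 0 1)
    (by simp) (by simp)

/-- The constant in the interior estimate `|Dᵐ h(0)| ≤ C M / rᵐ` for harmonic polynomials bounded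
by `M` in the ball of radius `r`, obtained from `m` gradient estimates on successively halved
balls. -/
def interiorConst (n : ℕ) : ℕ → ℝ
  | 0 => 1
  | m + 1 => interiorConst n m * (2 * n + 16) * 2 ^ m

theorem interiorConst_pos (n m : ℕ) : 0 < interiorConst n m := by
  induction m with
  | zero => exact one_pos
  | succ m ih => rw [interiorConst]; positivity

variable [NeZero n]

theorem mfact_mul_abs_coeff_le {m : ℕ} {r M : ℝ} {h : MvPolynomial (Fin n) ℝ} (hr : 0 < r)
    (hM : 0 ≤ M) (hh : plap h = 0) (hb : ∀ x : En n, ‖x‖ ≤ r → |peval h x| ≤ M)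
    {d : Fin n →₀ ℕ} (hd : d.degree = m) :
    (mfact d : ℝ) * |coeff d h| ≤ interiorConst n m * M / r ^ m := by
  induction m generalizing r M h d with
  | zero =>
    obtain rfl := (Finsupp.degree_eq_zero_iff d).1 hd
    simpa [mfact, interiorConst, peval_apply_zero] using hb 0 (by simpa using hr.le)
  | succ m ih =>
    obtain ⟨i, hi⟩ : ∃ i, d i ≠ 0 :=
      Finsupp.ne_iff.1 (show d ≠ 0 by rintro rfl; simp at hd)
    obtain ⟨e, rfl⟩ : ∃ e, d = e + Finsupp.single i 1 :=
      ⟨_, (Finsupp.sub_add_single_one_cancel hi).symm⟩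
    have hderiv := ih (half_pos hr) (M := (2 * n + 16) * M / r) (by positivity)
      (by rw [plap_pderiv, hh, map_zero]) (fun x hx => abs_peval_pderiv_le hr hM hh hb i hx)
      (d := e) (by simpa using hd)
    rw [coeff_pderiv, abs_mul, abs_of_nonneg (by positivity : (0 : ℝ) ≤ e i + 1)] at hderiv
    calc (mfact (e + Finsupp.single i 1) : ℝ) * |coeff (e + Finsupp.single i 1) h|
        = mfact e * (|coeff (e + Finsupp.single i 1) h| * (e i + 1)) := by
          rw [mfact_add_single]; push_cast; ring
      _ ≤ interiorConst n m * ((2 * n + 16) * M / r) / (r / 2) ^ m := hderiv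
      _ = interiorConst n (m + 1) * M / r ^ (m + 1) := by
          rw [interiorConst, div_pow, pow_succ]; field_simp

theorem abs_peval_sub_taylorPoly_le {m : ℕ} {r M : ℝ} {h : MvPolynomial (Fin n) ℝ} (hr : 0 < r)
    (hM : 0 ≤ M) (hh : plap h = 0) (hb : ∀ x : En n, ‖x‖ ≤ r → |peval h x| ≤ M) {x : En n}
    (hx : ‖x‖ ≤ r / 2 ^ m) :
    |peval (h - taylorPoly m h) x| ≤ n ^ m * interiorConst n m * M / r ^ m * ‖x‖ ^ m := by
  induction m generalizing r M h x with
  | zero => simpa [taylorPoly, interiorConst] using hb x (by simpa using hx)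
  | succ m ih =>
    have hderiv (i : Fin n) (y : En n) (hy : ‖y‖ ≤ ‖x‖) :
        |peval (pderiv i (h - taylorPoly (m + 1) h)) y|
          ≤ n ^ m * interiorConst n m * ((2 * n + 16) * M / r) / (r / 2) ^ m * ‖x‖ ^ m := by
      have hy' : ‖y‖ ≤ r / 2 / 2 ^ m := (hy.trans hx).trans_eq (by rw [pow_succ']; field_simp)
      rw [map_sub, pderiv_taylorPoly_succ]
      refine (ih (half_pos hr) (M := (2 * n + 16) * M / r) (by positivity)
        (by rw [plap_pderiv, hh, map_zero]) (fun z hz => abs_peval_pderiv_le hr hM hh hb i hz)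
        hy').trans ?_
      have := (interiorConst_pos n m).le
      gcongr
    have hmean := abs_peval_sub_peval_zero_le _ x hderiv
    rw [peval_sub_taylorPoly_apply_zero, sub_zero] at hmean
    refine hmean.trans_eq ?_
    rw [interiorConst, div_pow, pow_succ, pow_succ, pow_succ]
    field_simp

end Taylor

/-! ### The coefficient norm -/

section CoefficientNorm

variable {n : ℕ} (P Q : MvPolynomial (Fin n) ℝ)

theorem pnorm_eq_sum_of_support_subset {s : Finset (Fin n →₀ ℕ)} (hs : P.support ⊆ s) :
    pnorm P = ∑ d ∈ s, (mfact d : ℝ) * |coeff d P| :=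
  Finset.sum_subset hs fun d _ hd => by rw [notMem_support_iff.1 hd]; simp

theorem pnorm_nonneg : 0 ≤ pnorm P :=
  Finset.sum_nonneg fun d _ => by positivity

@[simp]
theorem pnorm_zero : pnorm (0 : MvPolynomial (Fin n) ℝ) = 0 := by simp [pnorm]

theorem pnorm_monomial (d : Fin n →₀ ℕ) (a : ℝ) : pnorm (monomial d a) = mfact d * |a| := by
  rw [pnorm_eq_sum_of_support_subset _ support_monomial_subset]
  simp

theorem pnorm_add_le : pnorm (P + Q) ≤ pnorm P + pnorm Q := by
  classical
  rw [pnorm_eq_sum_of_support_subset (P + Q) support_add,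
    pnorm_eq_sum_of_support_subset P (Finset.subset_union_left (s₂ := Q.support)),
    pnorm_eq_sum_of_support_subset Q (Finset.subset_union_right (s₁ := P.support)),
    ← Finset.sum_add_distrib]
  refine Finset.sum_le_sum fun d _ => ?_
  rw [coeff_add, ← mul_add]
  gcongr
  exact abs_add_le _ _

theorem pnorm_C_mul (a : ℝ) : pnorm (C a * P) = |a| * pnorm P := by
  have hsupport : (C a * P).support ⊆ P.support := fun d hd => by
    rw [mem_support_iff, coeff_C_mul] at hd
    exact mem_support_iff.2 (right_ne_zero_of_mul hd)
  rw [pnorm_eq_sum_of_support_subset _ hsupport, pnorm, Finset.mul_sum]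
  refine Finset.sum_congr rfl fun d _ => ?_
  rw [coeff_C_mul, abs_mul]
  ring

theorem pnorm_neg : pnorm (-P) = pnorm P := by simpa using pnorm_C_mul P (-1)

theorem pnorm_sum_le {ι : Type*} (s : Finset ι) (f : ι → MvPolynomial (Fin n) ℝ) :
    pnorm (∑ j ∈ s, f j) ≤ ∑ j ∈ s, pnorm (f j) :=
  Finset.le_sum_of_subadditive pnorm pnorm_zero.le pnorm_add_le s f

theorem pnorm_map_le {T : MvPolynomial (Fin n) ℝ →ₗ[ℝ] MvPolynomial (Fin n) ℝ}
    (hT : ∀ d a, pnorm (T (monomial d a)) ≤ mfact d * |a|) : pnorm (T P) ≤ pnorm P := by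
  conv_lhs => rw [P.as_sum, map_sum]
  exact (pnorm_sum_le _ _).trans (Finset.sum_le_sum fun d _ => hT d _)

theorem pnorm_pderiv_le (i : Fin n) : pnorm (pderiv i P) ≤ pnorm P := by
  refine pnorm_map_le P (T := (pderiv i).toLinearMap) fun d a => ?_
  change pnorm (pderiv i (monomial d a)) ≤ _
  rw [pderiv_monomial, pnorm_monomial, abs_mul, Nat.abs_cast]
  rcases eq_or_ne (d i) 0 with hi | hi
  · rw [hi]
    simp only [CharP.cast_eq_zero, mul_zero]
    positivity
  · obtain ⟨e, rfl⟩ : ∃ e, d = e + Finsupp.single i 1 :=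
      ⟨_, (Finsupp.sub_add_single_one_cancel hi).symm⟩
    rw [mfact_add_single, add_tsub_cancel_right]
    refine le_of_eq ?_
    simp only [Finsupp.coe_add, Pi.add_apply, Finsupp.single_eq_same]
    push_cast
    ring

theorem pnorm_le_pnorm_mul_X (i : Fin n) : pnorm P ≤ pnorm (P * X i) := by
  rw [pnorm, pnorm, support_mul_X, Finset.sum_map]
  refine Finset.sum_le_sum fun d _ => ?_
  simp only [addRightEmbedding_apply, coeff_mul_X, mfact_add_single]
  gcongr
  exact Nat.le_mul_of_pos_left _ (Nat.succ_pos _)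

theorem prod_abs_pow_le_norm_pow_degree (x : En n) (d : Fin n →₀ ℕ) :
    ∏ i, |x i ^ d i| ≤ ‖x‖ ^ d.degree := by
  rw [Finsupp.degree_eq_sum, ← Finset.prod_pow_eq_pow_sum]
  refine Finset.prod_le_prod (fun i _ => abs_nonneg _) fun i _ => ?_
  rw [abs_pow]
  gcongr
  exact PiLp.norm_apply_le x i

variable {P Q}

theorem abs_peval_le_pnorm_mul {x : En n} {B : ℝ} (hB : ∀ d ∈ P.support, ‖x‖ ^ d.degree ≤ B) :
    |peval P x| ≤ pnorm P * B := by
  rw [peval_eq_sum, pnorm, Finset.sum_mul]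
  refine (Finset.abs_sum_le_sum_abs _ _).trans (Finset.sum_le_sum fun d hd => ?_)
  rw [abs_mul, Finset.abs_prod]
  refine mul_le_mul ?_ ((prod_abs_pow_le_norm_pow_degree x d).trans (hB d hd))
    (Finset.prod_nonneg fun _ _ => abs_nonneg _) (by positivity)
  exact le_mul_of_one_le_left (abs_nonneg _) (one_le_mfact d)

theorem abs_peval_le_of_isHomogeneous {m : ℕ} (hP : P.IsHomogeneous m) (x : En n) :
    |peval P x| ≤ pnorm P * ‖x‖ ^ m :=
  abs_peval_le_pnorm_mul fun d hd => by
    rw [Finsupp.degree_eq_weight_one]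
    exact (congrArg _ (hP (mem_support_iff.1 hd))).le

theorem abs_peval_le_of_X_dvd {i : Fin n} (hP : X i ∣ P) {x : En n} (hx : ‖x‖ ≤ 1) :
    |peval P x| ≤ pnorm P * |x i| := by
  obtain ⟨R, rfl⟩ := hP
  rw [mul_comm (X i), peval_mul, peval_X, abs_mul]
  gcongr
  refine (abs_peval_le_pnorm_mul fun d _ => pow_le_one₀ (norm_nonneg x) hx).trans ?_
  rw [mul_one]
  exact pnorm_le_pnorm_mul_X R i

theorem substLast_zero_of_X_dvd [NeZero n] (hP : X (lastIdx n) ∣ P) : substLast 0 P = 0 := by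
  obtain ⟨R, rfl⟩ := hP
  simp [substLast]

theorem X_dvd_homogeneousComponent {i : Fin n} (hP : X i ∣ P) (j : ℕ) :
    X i ∣ homogeneousComponent j P := by
  obtain ⟨R, rfl⟩ := hP
  rw [← sum_homogeneousComponent R, Finset.mul_sum, map_sum]
  refine Finset.dvd_sum fun l _ => ?_
  rw [homogeneousComponent_of_mem
    ((isHomogeneous_X ℝ i).mul (homogeneousComponent_isHomogeneous l R))]
  split_ifs
  exacts [dvd_mul_right _ _, dvd_zero _]

/-- The constant in the bound of the `m`-th homogeneous component of a harmonic polynomial: the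
number of multi-indices of degree `m` times the constant for each coefficient. -/
def componentConst (n m : ℕ) : ℝ :=
  (Finset.finsuppAntidiag (Finset.univ : Finset (Fin n)) m).card * interiorConst n m

theorem componentConst_nonneg (n m : ℕ) : 0 ≤ componentConst n m :=
  mul_nonneg (Nat.cast_nonneg _) (interiorConst_pos n m).le

theorem pnorm_homogeneousComponent_le [NeZero n] {r M : ℝ} (hr : 0 < r) (hM : 0 ≤ M)
    (hP : plap P = 0) (hb : ∀ x : En n, ‖x‖ ≤ r → |peval P x| ≤ M) (m : ℕ) :
    pnorm (homogeneousComponent m P) ≤ componentConst n m * M / r ^ m := by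
  have hsupport : (homogeneousComponent m P).support
      ⊆ Finset.finsuppAntidiag (Finset.univ : Finset (Fin n)) m := fun d hd => by
    rw [mem_support_iff, coeff_homogeneousComponent] at hd
    simpa [Finset.mem_finsuppAntidiag, ← Finsupp.degree_eq_sum] using (ite_ne_right_iff.1 hd).1
  rw [pnorm_eq_sum_of_support_subset _ hsupport]
  refine (Finset.sum_le_card_nsmul _ _ (interiorConst n m * M / r ^ m) fun d hd => ?_).trans_eq ?_
  · have hd : d.degree = m := by
      simpa [Finset.mem_finsuppAntidiag, ← Finsupp.degree_eq_sum] using hd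
    rw [coeff_homogeneousComponent, if_pos hd]
    exact mfact_mul_abs_coeff_le hr hM hP hb hd
  · rw [nsmul_eq_mul, componentConst]
    ring

end CoefficientNorm

/-! ### Polynomial solutions of the Poisson equation -/

section ParticularSolution

variable {n : ℕ} (i : Fin n)

/-- The antiderivative in the variable `x_i` that vanishes on `{x_i = 0}`. -/
def antideriv : Module.End ℝ (MvPolynomial (Fin n) ℝ) :=
  (basisMonomials (Fin n) ℝ).constr ℝ fun d =>
    monomial (d + Finsupp.single i 1) ((d i + 1 : ℝ)⁻¹)

/-- The Laplacian in the variables other than `x_i`. -/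
def tangentialLap : Module.End ℝ (MvPolynomial (Fin n) ℝ) :=
  ∑ j ∈ Finset.univ.erase i, (pderiv j).toLinearMap * (pderiv j).toLinearMap

theorem antideriv_monomial (d : Fin n →₀ ℕ) (a : ℝ) :
    antideriv i (monomial d a) = monomial (d + Finsupp.single i 1) (a / (d i + 1)) := by
  have hsmul : monomial d a = a • basisMonomials (Fin n) ℝ d := by
    rw [coe_basisMonomials, smul_monomial, smul_eq_mul, mul_one]
  rw [hsmul, map_smul, antideriv, Module.Basis.constr_basis, smul_monomial, smul_eq_mul,
    div_eq_mul_inv]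

theorem antideriv_eq_sum (P : MvPolynomial (Fin n) ℝ) :
    antideriv i P
      = ∑ d ∈ P.support, monomial (d + Finsupp.single i 1) (coeff d P / (d i + 1)) := by
  conv_lhs => rw [P.as_sum, map_sum]
  exact Finset.sum_congr rfl fun d _ => antideriv_monomial i d _

theorem X_dvd_antideriv (P : MvPolynomial (Fin n) ℝ) : X i ∣ antideriv i P := by
  rw [antideriv_eq_sum]
  refine Finset.dvd_sum fun d _ => ?_
  rw [monomial_add_single, pow_one]
  exact dvd_mul_left _ _

theorem pnorm_antideriv_le (P : MvPolynomial (Fin n) ℝ) : pnorm (antideriv i P) ≤ pnorm P := by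
  refine pnorm_map_le P fun d a => ?_
  rw [antideriv_monomial, pnorm_monomial, mfact_add_single, abs_div]
  refine le_of_eq ?_
  rw [abs_of_nonneg (by positivity : (0 : ℝ) ≤ d i + 1)]
  push_cast
  field_simp

theorem isHomogeneous_antideriv {P : MvPolynomial (Fin n) ℝ} {m : ℕ} (hP : P.IsHomogeneous m) :
    (antideriv i P).IsHomogeneous (m + 1) := by
  rw [antideriv_eq_sum]
  refine IsHomogeneous.sum _ _ _ fun d hd => isHomogeneous_monomial _ ?_
  have hdegree : d.degree = m := by
    rw [Finsupp.degree_eq_weight_one]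
    exact hP (mem_support_iff.1 hd)
  rw [map_add, hdegree, Finsupp.degree_single]

theorem pderiv_antideriv (P : MvPolynomial (Fin n) ℝ) : pderiv i (antideriv i P) = P := by
  rw [antideriv_eq_sum, map_sum]
  conv_rhs => rw [P.as_sum]
  refine Finset.sum_congr rfl fun d _ => ?_
  rw [pderiv_monomial, add_tsub_cancel_right]
  have : (d i + 1 : ℝ) ≠ 0 := by positivity
  simp [this]

variable {i}

theorem commute_pderiv_antideriv {j : Fin n} (hj : j ≠ i) :
    Commute (pderiv j).toLinearMap (antideriv i) := by
  refine (basisMonomials (Fin n) ℝ).ext fun d => ?_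
  have hd : d + Finsupp.single i 1 - Finsupp.single j 1
      = d - Finsupp.single j 1 + Finsupp.single i 1 := by
    ext l
    rcases eq_or_ne l j with rfl | hl
    · simp [hj]
    · simp [hl]
  change pderiv j (antideriv i (monomial d 1)) = antideriv i (pderiv j (monomial d 1))
  rw [antideriv_monomial, pderiv_monomial, pderiv_monomial, antideriv_monomial, hd]
  congr 1
  simp only [one_div, Finsupp.coe_add, Pi.add_apply, ne_eq, hj, not_false_eq_true,
    Finsupp.single_eq_of_ne, add_zero, one_mul, Finsupp.coe_tsub, Pi.sub_apply, hj.symm, tsub_zero]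
  ring

theorem commute_tangentialLap_antideriv : Commute (tangentialLap i) (antideriv i) :=
  Commute.sum_left _ _ _ fun _ hj =>
    have hcomm := commute_pderiv_antideriv (Finset.ne_of_mem_erase hj)
    hcomm.mul_left hcomm

theorem plap_eq_add_tangentialLap (P : MvPolynomial (Fin n) ℝ) :
    plap P = pderiv i (pderiv i P) + tangentialLap i P := by
  rw [plap, ← Finset.add_sum_erase _ _ (Finset.mem_univ i), tangentialLap, LinearMap.sum_apply]
  rfl

theorem plap_antideriv_sq (P : MvPolynomial (Fin n) ℝ) :
    plap ((antideriv i ^ 2) P) = P + (antideriv i ^ 2 * tangentialLap i) P := by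
  rw [plap_eq_add_tangentialLap (i := i),
    ← (commute_tangentialLap_antideriv.pow_right 2).eq, pow_two]
  simp [pderiv_antideriv]

theorem tangentialLap_eq_zero {P : MvPolynomial (Fin n) ℝ} {m : ℕ} (hP : P.IsHomogeneous m)
    (hm : m < 2) : tangentialLap i P = 0 := by
  rw [tangentialLap, LinearMap.sum_apply]
  refine Finset.sum_eq_zero fun j _ => ?_
  have hP' : (pderiv j P).IsHomogeneous 0 := by
    simpa [show m - 1 = 0 by omega] using hP.pderiv (i := j)
  change pderiv j (pderiv j P) = 0
  rw [totalDegree_eq_zero_iff_eq_C.1 ((totalDegree_zero_iff_isHomogeneous _).2 hP'), pderiv_C]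

theorem isHomogeneous_tangentialLap {P : MvPolynomial (Fin n) ℝ} {m : ℕ}
    (hP : P.IsHomogeneous (m + 2)) : (tangentialLap i P).IsHomogeneous m := by
  rw [tangentialLap, LinearMap.sum_apply]
  exact IsHomogeneous.sum _ _ _ fun j _ => hP.pderiv.pderiv

theorem isHomogeneous_antideriv_sq_tangentialLap {P : MvPolynomial (Fin n) ℝ} {m : ℕ}
    (hP : P.IsHomogeneous m) :
    ((antideriv i ^ 2 * tangentialLap i) P).IsHomogeneous m := by
  rw [Module.End.mul_apply, pow_two, Module.End.mul_apply]
  rcases lt_or_ge m 2 with hm | hm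
  · rw [tangentialLap_eq_zero hP hm, map_zero, map_zero]
    exact isHomogeneous_zero _ _ _
  · obtain ⟨m, rfl⟩ := Nat.exists_eq_add_of_le' hm
    exact isHomogeneous_antideriv i (isHomogeneous_antideriv i (isHomogeneous_tangentialLap hP))

theorem tangentialLap_pow_apply_eq_zero {P : MvPolynomial (Fin n) ℝ} {m N : ℕ}
    (hP : P.IsHomogeneous m) (hN : m < N) : (tangentialLap i ^ N) P = 0 := by
  induction N generalizing m P with
  | zero => exact absurd hN m.not_lt_zero
  | succ N ih =>
    rw [pow_succ, Module.End.mul_apply]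
    rcases lt_or_ge m 2 with hm | hm
    · rw [tangentialLap_eq_zero hP hm, map_zero]
    · obtain ⟨m, rfl⟩ := Nat.exists_eq_add_of_le' hm
      exact ih (isHomogeneous_tangentialLap hP) (by omega)

theorem pnorm_tangentialLap_le (P : MvPolynomial (Fin n) ℝ) :
    pnorm (tangentialLap i P) ≤ n * pnorm P := by
  rw [tangentialLap, LinearMap.sum_apply]
  refine (pnorm_sum_le _ _).trans ((Finset.sum_le_card_nsmul _ _ (pnorm P) fun j _ =>
    (pnorm_pderiv_le _ j).trans (pnorm_pderiv_le P j)).trans ?_)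
  rw [nsmul_eq_mul]
  gcongr
  · exact pnorm_nonneg P
  · exact Finset.card_erase_le.trans_eq (Finset.card_fin n)

theorem antideriv_sq_tangentialLap_pow_apply_eq_zero {P : MvPolynomial (Fin n) ℝ} {m N : ℕ}
    (hP : P.IsHomogeneous m) (hN : m < N) : ((antideriv i ^ 2 * tangentialLap i) ^ N) P = 0 := by
  rw [(commute_tangentialLap_antideriv.pow_right 2).symm.mul_pow, Module.End.mul_apply,
    tangentialLap_pow_apply_eq_zero hP hN, map_zero]

theorem pnorm_antideriv_sq_le (P : MvPolynomial (Fin n) ℝ) :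
    pnorm ((antideriv i ^ 2) P) ≤ pnorm P := by
  rw [pow_two, Module.End.mul_apply]
  exact (pnorm_antideriv_le i _).trans (pnorm_antideriv_le i P)

theorem neg_antideriv_sq_tangentialLap_pow_apply {P : MvPolynomial (Fin n) ℝ} {m : ℕ}
    (hP : P.IsHomogeneous m) (j : ℕ) :
    (((-(antideriv i ^ 2 * tangentialLap i)) ^ j) P).IsHomogeneous m ∧
      pnorm (((-(antideriv i ^ 2 * tangentialLap i)) ^ j) P) ≤ n ^ j * pnorm P := by
  induction j with
  | zero => simpa using hP
  | succ j ih =>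
    rw [pow_succ', Module.End.mul_apply, LinearMap.neg_apply]
    refine ⟨(isHomogeneous_antideriv_sq_tangentialLap ih.1).neg, ?_⟩
    rw [pnorm_neg, Module.End.mul_apply, pow_succ' (n : ℝ), mul_assoc]
    exact (pnorm_antideriv_sq_le _).trans ((pnorm_tangentialLap_le _).trans
      (mul_le_mul_of_nonneg_left ih.2 n.cast_nonneg))

variable (n) in
/-- The constant in the bound of the particular solution of `ΔQ + P = 0` for `P` homogeneous of
degree `m`. -/
def particularConst (m : ℕ) : ℝ := ∑ j ∈ Finset.range (m + 1), (n : ℝ) ^ j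

theorem particularConst_nonneg (m : ℕ) : 0 ≤ particularConst n m := by
  unfold particularConst
  positivity

variable (i) in
/-- With `I` the antiderivative and `Δ'` the tangential Laplacian, `ΔI² = 1 + I²Δ'`, which is
inverted by a Neumann series: it terminates because `I` and `Δ'` commute. -/
theorem exists_isHomogeneous_plap_add_eq_zero {P : MvPolynomial (Fin n) ℝ} {m : ℕ}
    (hP : P.IsHomogeneous m) :
    ∃ Q : MvPolynomial (Fin n) ℝ, Q.IsHomogeneous (m + 2) ∧ X i ∣ Q ∧ plap Q + P = 0 ∧
      pnorm Q ≤ particularConst n m * pnorm P := by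
  set B := -(antideriv i ^ 2 * tangentialLap i) with hB
  set S := (∑ j ∈ Finset.range (m + 1), B ^ j) P with hS
  have hS_sum : S = ∑ j ∈ Finset.range (m + 1), (B ^ j) P := LinearMap.sum_apply _ _ _
  have hBS : S - B S = P := by
    have hB_pow : (B ^ (m + 1)) P = 0 := by
      rw [hB, neg_pow (antideriv i ^ 2 * tangentialLap i), Module.End.mul_apply,
        antideriv_sq_tangentialLap_pow_apply_eq_zero hP m.lt_succ_self, map_zero]
    have hgeom := LinearMap.congr_fun (mul_neg_geom_sum B (m + 1)) P
    rwa [Module.End.mul_apply, ← hS, LinearMap.sub_apply, LinearMap.sub_apply, hB_pow, sub_zero,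
      Module.End.one_apply, Module.End.one_apply] at hgeom
  refine ⟨-(antideriv i ^ 2) S, ?_, ?_, ?_, ?_⟩
  · have hS_homog : S.IsHomogeneous m := hS_sum ▸
      IsHomogeneous.sum _ _ _ fun j _ => (neg_antideriv_sq_tangentialLap_pow_apply hP j).1
    rw [pow_two]
    exact (isHomogeneous_antideriv i (isHomogeneous_antideriv i hS_homog)).neg
  · rw [dvd_neg, pow_two]
    exact X_dvd_antideriv i _
  · rw [plap_neg, plap_antideriv_sq, neg_add_eq_zero]
    simpa [hB] using hBS
  · rw [pnorm_neg, particularConst, Finset.sum_mul]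
    refine (pnorm_antideriv_sq_le S).trans ?_
    rw [hS_sum]
    exact (pnorm_sum_le _ _).trans (Finset.sum_le_sum fun j _ =>
      (neg_antideriv_sq_tangentialLap_pow_apply hP j).2)

end ParticularSolution

/-! ### Harmonic polynomials with nearly prescribed values on a sphere -/

section PolynomialDirichlet

variable {n : ℕ} {p : MvPolynomial (Fin n) ℝ}

theorem totalDegree_pderiv_le {m : ℕ} (i : Fin n) (hp : p.totalDegree ≤ m + 1) :
    (pderiv i p).totalDegree ≤ m := by
  refine Finset.sup_le fun d hd => ?_
  rw [mem_support_iff, coeff_pderiv] at hd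
  have hdegree : (d + Finsupp.single i 1).degree ≤ m + 1 :=
    (le_totalDegree (mem_support_iff.2 (left_ne_zero_of_mul hd))).trans hp
  rw [map_add, Finsupp.degree_single] at hdegree
  exact Nat.le_of_succ_le_succ hdegree

theorem totalDegree_plap_le {m : ℕ} (hp : p.totalDegree ≤ m + 2) : (plap p).totalDegree ≤ m :=
  totalDegree_finsetSum_le fun i _ => totalDegree_pderiv_le i (totalDegree_pderiv_le i hp)

theorem totalDegree_spherePoly_le (r : ℝ) :
    (spherePoly r : MvPolynomial (Fin n) ℝ).totalDegree ≤ 2 := by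
  refine (totalDegree_sub _ _).trans (max_le ((totalDegree_C _).le.trans zero_le_two) ?_)
  exact totalDegree_finsetSum_le fun i _ => (totalDegree_X_pow i 2).le

theorem spherePoly_ne_zero {r : ℝ} (hr : 0 < r) : (spherePoly r : MvPolynomial (Fin n) ℝ) ≠ 0 :=
  fun h => by
    have hzero := peval_spherePoly r (0 : En n)
    rw [h, peval_zero, norm_zero] at hzero
    nlinarith

theorem eq_zero_of_plap_eq_zero_of_eq_zero_on_sphere [NeZero n] {r : ℝ} (hr : 0 < r)
    (hp : plap p = 0) (hsphere : ∀ x : En n, ‖x‖ = r → peval p x = 0) : p = 0 := by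
  have hball : ∀ x : En n, ‖x‖ ≤ r → |peval p x| ≤ 0 := fun x hx =>
    abs_peval_le_of_abs_le_sphere hp (fun y hy => by rw [hsphere y hy, abs_zero]) hx
  ext d
  have hcoeff := mfact_mul_abs_coeff_le hr le_rfl hp hball (d := d) rfl
  rw [mul_zero, zero_div] at hcoeff
  simpa using nonpos_of_mul_nonpos_right hcoeff (one_pos.trans_le (one_le_mfact d))

/-- The operator `q ↦ Δ((r² - |x|²) q)`, which maps polynomials of degree at most `m` to
themselves. -/
def spherePolyLap (n : ℕ) (r : ℝ) : Module.End ℝ (MvPolynomial (Fin n) ℝ) where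
  toFun q := plap (spherePoly r * q)
  map_add' q₁ q₂ := by rw [mul_add, plap_add]
  map_smul' a q := by
    rw [RingHom.id_apply, smul_eq_C_mul, smul_eq_C_mul, ← plap_C_mul, mul_left_comm]

theorem mapsTo_spherePolyLap (r : ℝ) (m : ℕ) :
    MapsTo (spherePolyLap n r) (restrictTotalDegree (Fin n) ℝ m)
      (restrictTotalDegree (Fin n) ℝ m) := by
  intro q hq
  rw [SetLike.mem_coe, mem_restrictTotalDegree] at hq ⊢
  refine totalDegree_plap_le ((totalDegree_mul _ _).trans ?_)
  have := totalDegree_spherePoly_le (n := n) r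
  omega

theorem exists_spherePolyLap_eq [NeZero n] {r : ℝ} (hr : 0 < r)
    (p : MvPolynomial (Fin n) ℝ) : ∃ q, spherePolyLap n r q = p := by
  let T := (spherePolyLap n r).restrict (mapsTo_spherePolyLap r p.totalDegree)
  have hT : Function.Injective T := by
    rw [← LinearMap.ker_eq_bot, LinearMap.ker_eq_bot']
    rintro ⟨q, _⟩ hq
    have hmul : spherePoly r * q = 0 := by
      refine eq_zero_of_plap_eq_zero_of_eq_zero_on_sphere hr (congrArg Subtype.val hq) ?_
      intro x hx
      rw [peval_mul, peval_spherePoly, hx, sub_self, zero_mul]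
    exact Subtype.ext ((mul_eq_zero.1 hmul).resolve_left (spherePoly_ne_zero hr))
  obtain ⟨q, hq⟩ := LinearMap.injective_iff_surjective.1 hT
    ⟨p, (mem_restrictTotalDegree _ _ _).2 le_rfl⟩
  exact ⟨q, congrArg Subtype.val hq⟩

theorem exists_plap_eq_zero_eq_on_sphere [NeZero n] {r : ℝ} (hr : 0 < r)
    (p : MvPolynomial (Fin n) ℝ) :
    ∃ h : MvPolynomial (Fin n) ℝ, plap h = 0 ∧
      ∀ x : En n, ‖x‖ = r → peval h x = peval p x := by
  obtain ⟨q, hq⟩ := exists_spherePolyLap_eq hr (plap p)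
  refine ⟨p - spherePoly r * q, ?_, fun x hx => ?_⟩
  · rw [plap_sub, sub_eq_zero]
    exact hq.symm
  · rw [peval_sub, peval_mul, peval_spherePoly, hx, sub_self, zero_mul, sub_zero]

theorem exists_peval_near_on_compact {K : Set (En n)} (hK : IsCompact K) {φ : En n → ℝ}
    (hφ : ContinuousOn φ K) {ε : ℝ} (hε : 0 < ε) :
    ∃ p : MvPolynomial (Fin n) ℝ, ∀ x ∈ K, |peval p x - φ x| < ε := by
  have := isCompact_iff_compactSpace.1 hK
  let restr : MvPolynomial (Fin n) ℝ →ₐ[ℝ] C(K, ℝ) :=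
    aeval fun i => ⟨fun x => (x : En n) i, by fun_prop⟩
  have restr_apply (p : MvPolynomial (Fin n) ℝ) (x : K) : restr p x = peval p x := by
    induction p using MvPolynomial.induction_on with
    | C a => simp [restr]
    | add p q hp hq => simp [hp, hq]
    | mul_X p j hp => simp [hp, restr]
  have hsep : restr.range.SeparatesPoints := by
    intro x y hxy
    obtain ⟨i, hi⟩ : ∃ i, (x : En n) i ≠ (y : En n) i := by
      by_contra! h
      exact hxy (Subtype.ext (PiLp.ext h))
    exact ⟨restr (X i), ⟨restr (X i), ⟨X i, rfl⟩, rfl⟩, by simpa [restr_apply] using hi⟩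
  obtain ⟨⟨g, p, rfl⟩, hg⟩ :=
    ContinuousMap.exists_mem_subalgebra_near_continuousMap_of_separatesPoints restr.range hsep
      ⟨K.domRestrict φ, continuousOn_iff_continuous_domRestrict.1 hφ⟩ ε hε
  refine ⟨p, fun x hx => ?_⟩
  have hnear := (ContinuousMap.norm_coe_le_norm _ (⟨x, hx⟩ : K)).trans_lt hg
  simpa [restr_apply] using hnear

end PolynomialDirichlet

section Reflection

variable {n : ℕ} [NeZero n]

/-- The reflection in the hyperplane `{x_n = 0}`. -/
def reflectLast (x : En n) : En n :=
  WithLp.toLp 2 fun i => if i = lastIdx n then -x i else x i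

/-- The polynomial `p ∘ reflectLast`. -/
def preflectLast : MvPolynomial (Fin n) ℝ →ₐ[ℝ] MvPolynomial (Fin n) ℝ :=
  aeval fun i => if i = lastIdx n then -X i else X i

theorem reflectLast_apply (x : En n) (i : Fin n) :
    reflectLast x i = if i = lastIdx n then -x i else x i := rfl

theorem xn_reflectLast (x : En n) : xn (reflectLast x) = -xn x := by
  simp [xn, reflectLast_apply]

theorem norm_reflectLast (x : En n) : ‖reflectLast x‖ = ‖x‖ := by
  rw [EuclideanSpace.norm_eq, EuclideanSpace.norm_eq]
  congr 1
  refine Finset.sum_congr rfl fun i _ => ?_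
  rw [reflectLast_apply]
  split_ifs <;> simp

theorem reflectLast_reflectLast (x : En n) : reflectLast (reflectLast x) = x := by
  refine PiLp.ext fun i => ?_
  rw [reflectLast_apply, reflectLast_apply]
  split_ifs <;> simp

theorem preflectLast_X (i : Fin n) :
    preflectLast (X i : MvPolynomial (Fin n) ℝ) = if i = lastIdx n then -X i else X i :=
  aeval_X _ i

theorem peval_preflectLast (p : MvPolynomial (Fin n) ℝ) (x : En n) :
    peval (preflectLast p) x = peval p (reflectLast x) := by
  induction p using MvPolynomial.induction_on with
  | C a => simp [algHom_C]
  | add p q hp hq => simp only [map_add, peval_add, hp, hq]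
  | mul_X p j hp =>
    simp only [map_mul, peval_mul, hp, peval_X, reflectLast_apply, preflectLast_X]
    split_ifs <;> simp

theorem pderiv_preflectLast (i : Fin n) (p : MvPolynomial (Fin n) ℝ) :
    pderiv i (preflectLast p)
      = (if i = lastIdx n then -1 else 1) * preflectLast (pderiv i p) := by
  induction p using MvPolynomial.induction_on with
  | C a => simp [algHom_C]
  | add p q hp hq => simp only [map_add, hp, hq, mul_add]
  | mul_X p j hp =>
    simp only [map_mul, pderiv_mul, hp, map_add, preflectLast_X]
    rcases eq_or_ne i j with rfl | hij
    · split_ifs <;> simp [add_comm]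
    · split_ifs <;> simp [pderiv_X_of_ne hij.symm]

theorem plap_preflectLast (p : MvPolynomial (Fin n) ℝ) :
    plap (preflectLast p) = preflectLast (plap p) := by
  rw [plap, plap, map_sum]
  refine Finset.sum_congr rfl fun i _ => ?_
  rw [pderiv_preflectLast]
  split_ifs with h <;> simp [pderiv_preflectLast, h]

theorem X_dvd_sub_preflectLast (p : MvPolynomial (Fin n) ℝ) :
    X (lastIdx n) ∣ p - preflectLast p := by
  induction p using MvPolynomial.induction_on with
  | C a => simp [algHom_C]
  | add p q hp hq =>
    rw [map_add, add_sub_add_comm]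
    exact dvd_add hp hq
  | mul_X p j hp =>
    rw [map_mul, preflectLast_X]
    split_ifs with h
    · rw [h, mul_neg, sub_neg_eq_add, ← add_mul]
      exact dvd_mul_left _ _
    · rw [← sub_mul]
      exact hp.mul_right _

theorem plap_sub_preflectLast {p : MvPolynomial (Fin n) ℝ} (hp : plap p = 0) :
    plap (p - preflectLast p) = 0 := by
  rw [plap_sub, plap_preflectLast, hp, map_zero, sub_zero]

theorem peval_sub_preflectLast_reflectLast (p : MvPolynomial (Fin n) ℝ) (x : En n) :
    peval (p - preflectLast p) (reflectLast x) = -peval (p - preflectLast p) x := by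
  simp only [peval_sub, peval_preflectLast, reflectLast_reflectLast, neg_sub]

end Reflection

section HalfBall

variable {n : ℕ}

theorem frontier_inter_ball {Ω : Set (En n)} (hΩ : IsOpen Ω) {r : ℝ} {x : En n}
    (hx : x ∈ frontier (Ω ∩ ball 0 r)) :
    x ∈ closure Ω ∧ ‖x‖ ≤ r ∧ (‖x‖ = r ∨ x ∈ frontier Ω) := by
  have hx_closure : x ∈ closure Ω := closure_mono inter_subset_left hx.1
  have hx_norm : ‖x‖ ≤ r := mem_closedBall_zero_iff.1
    (closure_ball_subset_closedBall (closure_mono inter_subset_right hx.1))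
  refine ⟨hx_closure, hx_norm, hx_norm.eq_or_lt.imp_right fun hlt => ⟨hx_closure, fun hmem => ?_⟩⟩
  refine hx.2 ?_
  rw [(hΩ.inter isOpen_ball).interior_eq]
  exact ⟨interior_subset hmem, mem_ball_zero_iff.2 hlt⟩

variable [NeZero n]

theorem continuous_xn : Continuous (xn : En n → ℝ) := by
  unfold xn
  fun_prop

theorem abs_xn_le_norm (x : En n) : |xn x| ≤ ‖x‖ :=
  PiLp.norm_apply_le x (lastIdx n)

theorem peval_eq_zero_of_X_dvd {p : MvPolynomial (Fin n) ℝ} (hp : X (lastIdx n) ∣ p) {x : En n}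
    (hx : xn x = 0) : peval p x = 0 := by
  obtain ⟨q, rfl⟩ := hp
  rw [peval_mul, peval_X, show x (lastIdx n) = 0 from hx, zero_mul]

theorem peval_le_of_le_half_sphere {p : MvPolynomial (Fin n) ℝ} (hp : plap p = 0)
    (hdvd : X (lastIdx n) ∣ p) {r K δ : ℝ} (hδ : 0 ≤ δ)
    (hs : ∀ x : En n, ‖x‖ = r → 0 ≤ xn x → peval p x ≤ K * xn x + δ) {x : En n}
    (hx : ‖x‖ ≤ r) (hx0 : 0 ≤ xn x) : peval p x ≤ K * xn x + δ := by
  rcases hx.eq_or_lt with hxr | hxr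
  · exact hs x hxr hx0
  have hflat : ∀ y : En n, xn y = 0 → peval p y ≤ K * xn y + δ := fun y hy => by
    rw [peval_eq_zero_of_X_dvd hdvd hy, hy, mul_zero, zero_add]
    exact hδ
  rcases hx0.eq_or_lt with hx0 | hx0
  · exact hflat x hx0.symm
  have hopen : IsOpen {y : En n | 0 < xn y} := isOpen_lt continuous_const continuous_xn
  have hpeval : ∀ y, peval (p - C K * X (lastIdx n)) y = peval p y - K * xn y := fun y => by
    simp [xn]
  suffices peval (p - C K * X (lastIdx n)) x ≤ δ by
    rw [hpeval] at this
    linarith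
  refine le_of_le_frontier_of_nonneg_laplacian (hopen.inter isOpen_ball)
    (isBounded_ball.subset inter_subset_right) (continuous_peval _).continuousOn
    (fun y _ => ⟨_, ?_, hasLaplacianAt_peval _ y⟩) (fun y hy => ?_)
    x ⟨hx0, mem_ball_zero_iff.2 hxr⟩
  · rw [plap_sub, hp, plap_C_mul, plap_X, mul_zero, sub_zero, peval_zero]
  · obtain ⟨hy_closure, -, hy⟩ := frontier_inter_ball hopen hy
    have hy0 : 0 ≤ xn y := (closure_lt_subset_le continuous_const continuous_xn) hy_closure
    have hy_le : peval p y ≤ K * xn y + δ := by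
      refine hy.elim (fun hyr => hs y hyr hy0) fun hyfr => hflat y ?_
      exact (frontier_lt_subset_eq continuous_const continuous_xn hyfr).symm
    rw [hpeval]
    linarith

theorem abs_peval_le_of_le_half_sphere {p : MvPolynomial (Fin n) ℝ} (hp : plap p = 0)
    (hdvd : X (lastIdx n) ∣ p) (hodd : ∀ x, peval p (reflectLast x) = -peval p x) {r K δ : ℝ}
    (hδ : 0 ≤ δ) (hs : ∀ x : En n, ‖x‖ = r → 0 ≤ xn x → |peval p x| ≤ K * xn x + δ) {x : En n}
    (hx : ‖x‖ ≤ r) : |peval p x| ≤ K * |xn x| + δ := by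
  have hupper : ∀ y : En n, ‖y‖ ≤ r → 0 ≤ xn y → |peval p y| ≤ K * |xn y| + δ := by
    intro y hy hy0
    rw [abs_of_nonneg hy0, abs_le']
    refine ⟨peval_le_of_le_half_sphere hp hdvd hδ
      (fun z hz hz0 => (le_abs_self _).trans (hs z hz hz0)) hy hy0, ?_⟩
    rw [← peval_neg]
    refine peval_le_of_le_half_sphere (by rw [plap_neg, hp, neg_zero]) (dvd_neg.2 hdvd) hδ
      (fun z hz hz0 => ?_) hy hy0
    rw [peval_neg]
    exact (neg_le_abs _).trans (hs z hz hz0)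
  rcases le_total 0 (xn x) with hx0 | hx0
  · exact hupper x hx hx0
  · have hreflect := hupper (reflectLast x) (by rwa [norm_reflectLast])
      (by rw [xn_reflectLast]; exact neg_nonneg.2 hx0)
    rwa [hodd, abs_neg, xn_reflectLast, abs_neg] at hreflect

end HalfBall

/-! ### Comparison in nearly flat domains -/

section NearlyFlat

variable {n : ℕ} [NeZero n]

/-- `Ω` is an open set which, inside the unit ball, contains `{x_n > δ}`, avoids `{x_n < -δ}`, and
does not contain the origin. -/
structure IsNearlyFlat (δ : ℝ) (Ω : Set (En n)) : Prop where
  isOpen : IsOpen Ω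
  zero_notMem : (0 : En n) ∉ Ω
  mem_of_lt_xn : ∀ ⦃x : En n⦄, ‖x‖ < 1 → δ < xn x → x ∈ Ω
  notMem_of_xn_lt : ∀ ⦃x : En n⦄, ‖x‖ < 1 → xn x < -δ → x ∉ Ω

/-- `u` is bounded by `1` and solves a Dirichlet problem in a nearly flat domain `Ω`, with data of
size `δ`. The bound on the Laplacian may blow up at the origin, which is not a point of `Ω`. -/
structure AlmostFlatSolution (α δ : ℝ) (Ω : Set (En n)) (u : En n → ℝ) : Prop
    extends IsNearlyFlat δ Ω where
  continuousOn : ContinuousOn u (closure Ω ∩ ball 0 1)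
  exists_hasLaplacianAt : ∀ x ∈ Ω ∩ ball 0 1, ∃ L, |L| ≤ δ * ‖x‖ ^ (α - 1) ∧ HasLaplacianAt u L x
  abs_le_one : ∀ x ∈ Ω ∩ ball 0 1, |u x| ≤ 1
  abs_le_of_mem_frontier : ∀ x ∈ frontier Ω ∩ ball 0 1, |u x| ≤ δ

variable {α δ : ℝ} {Ω : Set (En n)} {u : En n → ℝ} {x : En n}

namespace IsNearlyFlat

theorem neg_le_xn (hΩ : IsNearlyFlat δ Ω) (hx : x ∈ closure Ω) (hx1 : ‖x‖ < 1) : -δ ≤ xn x := by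
  by_contra! hlt
  have hopen : IsOpen (ball (0 : En n) 1 ∩ {y | xn y < -δ}) :=
    isOpen_ball.inter (isOpen_lt continuous_xn continuous_const)
  obtain ⟨y, ⟨hy1, hy⟩, hyΩ⟩ := mem_closure_iff.1 hx _ hopen ⟨mem_ball_zero_iff.2 hx1, hlt⟩
  exact hΩ.notMem_of_xn_lt (mem_ball_zero_iff.1 hy1) hy hyΩ

theorem abs_xn_le (hΩ : IsNearlyFlat δ Ω) (hx : x ∈ frontier Ω) (hx1 : ‖x‖ < 1) : |xn x| ≤ δ := by
  refine abs_le.2 ⟨hΩ.neg_le_xn hx.1 hx1, ?_⟩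
  by_contra! hlt
  exact (hΩ.isOpen.frontier_eq ▸ hx).2 (hΩ.mem_of_lt_xn hx1 hlt)

theorem mem_or_mem_frontier (hΩ : IsNearlyFlat δ Ω) (hx : x ∈ closure Ω) :
    x ∈ Ω ∨ x ∈ frontier Ω := by
  rw [hΩ.isOpen.frontier_eq]
  exact (em (x ∈ Ω)).imp_right fun hxΩ => ⟨hx, hxΩ⟩

end IsNearlyFlat

namespace AlmostFlatSolution

theorem neg (H : AlmostFlatSolution α δ Ω u) : AlmostFlatSolution α δ Ω fun x => -u x where
  toIsNearlyFlat := H.toIsNearlyFlat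
  continuousOn := H.continuousOn.neg
  exists_hasLaplacianAt x hx := by
    obtain ⟨L, hL, hLx⟩ := H.exists_hasLaplacianAt x hx
    exact ⟨-L, by rwa [abs_neg], hLx.neg⟩
  abs_le_one x hx := by
    rw [abs_neg]
    exact H.abs_le_one x hx
  abs_le_of_mem_frontier x hx := by
    rw [abs_neg]
    exact H.abs_le_of_mem_frontier x hx

theorem abs_le_one_of_mem_closure (H : AlmostFlatSolution α δ Ω u) (hδ : δ ≤ 1)
    (hx : x ∈ closure Ω) (hx1 : ‖x‖ < 1) : |u x| ≤ 1 := by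
  rw [← mem_ball_zero_iff] at hx1
  exact (H.mem_or_mem_frontier hx).elim (fun hxΩ => H.abs_le_one x ⟨hxΩ, hx1⟩)
    fun hxfr => (H.abs_le_of_mem_frontier x ⟨hxfr, hx1⟩).trans hδ

theorem sub_peval_le (H : AlmostFlatSolution α δ Ω u) (hn : 2 ≤ n) (hα : 0 < α) (hδ : 0 ≤ δ)
    {p : MvPolynomial (Fin n) ℝ} (hp : plap p = 0) {r m : ℝ} (hr : r < 1)
    (hm : ∀ x ∈ closure Ω, ‖x‖ ≤ r → (‖x‖ = r ∨ x ∈ frontier Ω) → u x - peval p x ≤ m)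
    (hx : x ∈ Ω) (hxr : ‖x‖ < r) : u x - peval p x ≤ m + δ := by
  have hclosure : closure (Ω ∩ ball (0 : En n) r) ⊆ closure Ω ∩ ball 0 1 := fun y hy =>
    ⟨closure_mono inter_subset_left hy, closedBall_subset_ball hr
      (closure_ball_subset_closedBall (closure_mono inter_subset_right hy))⟩
  refine le_add_of_le_frontier_of_laplacian_ge (w := fun y => u y - peval p y) hn hα
    (H.isOpen.inter isOpen_ball) (inter_subset_right.trans (ball_subset_ball hr.le))
    (fun h => H.zero_notMem h.1)
    ((H.continuousOn.mono hclosure).sub (continuous_peval p).continuousOn) hδ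
    (fun y hy => ?_) (fun y hy => ?_) ⟨hx, mem_ball_zero_iff.2 hxr⟩
  · obtain ⟨L, hL, hLy⟩ := H.exists_hasLaplacianAt y ⟨hy.1, ball_subset_ball hr.le hy.2⟩
    refine ⟨_, ?_, hLy.sub (hasLaplacianAt_peval p y)⟩
    rw [hp, peval_zero, sub_zero]
    exact (abs_le.1 hL).1
  · obtain ⟨hy_closure, hy_norm, hy⟩ := frontier_inter_ball H.isOpen hy
    exact hm y hy_closure hy_norm hy

theorem abs_sub_peval_le (H : AlmostFlatSolution α δ Ω u) (hn : 2 ≤ n) (hα : 0 < α) (hδ : 0 ≤ δ)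
    {p : MvPolynomial (Fin n) ℝ} (hp : plap p = 0) {r m : ℝ} (hr : r < 1)
    (hm : ∀ x ∈ closure Ω, ‖x‖ ≤ r → (‖x‖ = r ∨ x ∈ frontier Ω) → |u x - peval p x| ≤ m)
    (hx : x ∈ Ω) (hxr : ‖x‖ < r) : |u x - peval p x| ≤ m + δ := by
  have hneg : ∀ y, -u y - peval (-p) y = -(u y - peval p y) := fun y => by
    rw [peval_neg]
    ring
  rw [abs_le', ← hneg]
  refine ⟨H.sub_peval_le hn hα hδ hp hr
      (fun y hy hyr hy' => (le_abs_self _).trans (hm y hy hyr hy')) hx hxr,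
    H.neg.sub_peval_le hn hα hδ (by rw [plap_neg, hp, neg_zero]) hr (fun y hy hyr hy' => ?_)
      hx hxr⟩
  rw [hneg]
  exact (neg_le_abs _).trans (hm y hy hyr hy')

end AlmostFlatSolution

end NearlyFlat

section BoundaryBarrier

variable {n : ℕ} [NeZero n]

/-- The harmonic polynomial `64 (|x - x₀|² - n (x_n + δ)² + 2n (x_n + δ))`. -/
def barrierPoly (x₀ : En n) (δ : ℝ) : MvPolynomial (Fin n) ℝ :=
  C 64 * (normSqPoly - C 2 * ∑ i, C (x₀ i) * X i + C (‖x₀‖ ^ 2)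
    - C (n : ℝ) * ((X (lastIdx n) + C δ) * (X (lastIdx n) + C δ))
    + C (2 * n : ℝ) * (X (lastIdx n) + C δ))

theorem peval_barrierPoly (x₀ : En n) (δ : ℝ) (x : En n) :
    peval (barrierPoly x₀ δ) x
      = 64 * (‖x - x₀‖ ^ 2 + n * ((xn x + δ) * (2 - (xn x + δ)))) := by
  have hnorm : ‖x - x₀‖ ^ 2 = ‖x‖ ^ 2 - 2 * ∑ i, x₀ i * x i + ‖x₀‖ ^ 2 := by
    rw [norm_sub_sq_real, PiLp.inner_apply]
    rfl
  rw [hnorm]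
  simp only [barrierPoly, xn, peval_add, peval_sub, peval_mul, peval_sum, peval_C, peval_X,
    peval_normSqPoly]
  ring

theorem plap_barrierPoly (x₀ : En n) (δ : ℝ) : plap (barrierPoly x₀ δ) = 0 := by
  have hlinear : plap (X (lastIdx n) + C δ) = 0 := by simp [plap_add]
  have hsq : plap ((X (lastIdx n) + C δ) * (X (lastIdx n) + C δ)) = C 2 := by
    rw [plap_mul_self _ hlinear]
    simp [pderiv_X, Pi.single_apply, ite_pow, map_ofNat C 2]
  simp only [barrierPoly, plap_C_mul, plap_add, plap_sub, plap_sum, plap_X, plap_C, hsq,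
    plap_normSqPoly, mul_zero, Finset.sum_const_zero, sub_zero, add_zero, ← C_mul]
  simp [mul_comm]

namespace AlmostFlatSolution

variable {α δ : ℝ} {Ω : Set (En n)} {u : En n → ℝ} {x₀ : En n}

theorem sub_peval_barrierPoly_le_of_boundary (H : AlmostFlatSolution α δ Ω u) (hδ0 : 0 ≤ δ)
    (hδ1 : δ ≤ 1) (hx₀ : ‖x₀‖ ≤ 3 / 4) {x : En n} (hx : x ∈ closure Ω) (hx_norm : ‖x‖ ≤ 7 / 8)
    (hx' : ‖x‖ = 7 / 8 ∨ x ∈ frontier Ω) : u x - peval (barrierPoly x₀ δ) x ≤ δ := by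
  have hx1 : ‖x‖ < 1 := by linarith
  have hxn_lower := H.neg_le_xn hx hx1
  have hxn_upper := (le_abs_self _).trans (abs_xn_le_norm x)
  have hnonneg : 0 ≤ (n : ℝ) * ((xn x + δ) * (2 - (xn x + δ))) :=
    mul_nonneg n.cast_nonneg (mul_nonneg (by linarith) (by linarith))
  rw [peval_barrierPoly]
  rcases hx' with hsphere | hfr
  · have hu := (le_abs_self _).trans (H.abs_le_one_of_mem_closure hδ1 hx hx1)
    have hdist : 1 / 8 ≤ ‖x - x₀‖ := by linarith [norm_sub_norm_le x x₀]
    nlinarith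
  · have hu := (le_abs_self _).trans
      (H.abs_le_of_mem_frontier x ⟨hfr, mem_ball_zero_iff.2 hx1⟩)
    nlinarith [sq_nonneg ‖x - x₀‖]

theorem le_linear (H : AlmostFlatSolution α δ Ω u) (hn : 2 ≤ n) (hα : 0 < α) (hδ0 : 0 ≤ δ)
    (hδ1 : δ ≤ 1) (hx₀ : x₀ ∈ Ω) (hx₀_norm : ‖x₀‖ ≤ 3 / 4) :
    u x₀ ≤ 128 * n * (xn x₀ + δ) + 2 * δ := by
  have hle := H.sub_peval_le hn hα hδ0 (plap_barrierPoly x₀ δ) (by norm_num : (7 / 8 : ℝ) < 1)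
    (fun x => H.sub_peval_barrierPoly_le_of_boundary hδ0 hδ1 hx₀_norm) hx₀
    (hx₀_norm.trans_lt (by norm_num))
  rw [peval_barrierPoly, sub_self, norm_zero] at hle
  nlinarith [mul_nonneg (n.cast_nonneg : (0 : ℝ) ≤ n) (sq_nonneg (xn x₀ + δ))]

theorem abs_le_linear (H : AlmostFlatSolution α δ Ω u) (hn : 2 ≤ n) (hα : 0 < α) (hδ0 : 0 ≤ δ)
    (hδ1 : δ ≤ 1) (hx₀ : x₀ ∈ closure Ω) (hx₀_norm : ‖x₀‖ ≤ 3 / 4) :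
    |u x₀| ≤ 128 * n * (xn x₀ + δ) + 2 * δ := by
  have hx₀1 : ‖x₀‖ < 1 := hx₀_norm.trans_lt (by norm_num)
  rcases H.mem_or_mem_frontier hx₀ with hmem | hfr
  · exact abs_le'.2 ⟨H.le_linear hn hα hδ0 hδ1 hmem hx₀_norm,
      H.neg.le_linear hn hα hδ0 hδ1 hmem hx₀_norm⟩
  · have hu := H.abs_le_of_mem_frontier x₀ ⟨hfr, mem_ball_zero_iff.2 hx₀1⟩
    have hxn := H.neg_le_xn hx₀ hx₀1
    have : 0 ≤ 128 * (n : ℝ) * (xn x₀ + δ) := mul_nonneg (by positivity) (by linarith)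
    linarith

end AlmostFlatSolution

end BoundaryBarrier

/-! ### Harmonic approximation -/

section Truncation

variable {n : ℕ}

/-- The piecewise linear cutoff that is `0` on `(-∞, 2δ]` and `1` on `[3δ, ∞)`. -/
def cutoff (δ t : ℝ) : ℝ := min 1 (max 0 ((t - 2 * δ) / δ))

theorem cutoff_nonneg (δ t : ℝ) : 0 ≤ cutoff δ t := le_min zero_le_one (le_max_left _ _)

theorem cutoff_le_one (δ t : ℝ) : cutoff δ t ≤ 1 := min_le_left _ _

theorem cutoff_eq_zero {δ t : ℝ} (hδ : 0 < δ) (ht : t ≤ 2 * δ) : cutoff δ t = 0 := by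
  rw [cutoff, max_eq_left (div_nonpos_of_nonpos_of_nonneg (by linarith) hδ.le)]
  exact min_eq_right zero_le_one

theorem cutoff_eq_one {δ t : ℝ} (hδ : 0 < δ) (ht : 3 * δ ≤ t) : cutoff δ t = 1 := by
  have hle : 1 ≤ (t - 2 * δ) / δ := by
    rw [le_div_iff₀ hδ]
    linarith
  exact min_eq_left (hle.trans (le_max_right _ _))

theorem continuous_cutoff (δ : ℝ) : Continuous (cutoff δ) := by
  unfold cutoff
  fun_prop

variable [NeZero n]

/-- `u` cut off near the hyperplane `x_n = 0`, so that it makes sense on both sides of a nearly flat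
boundary. -/
def truncation (δ : ℝ) (u : En n → ℝ) (x : En n) : ℝ := cutoff δ (xn x) * u x

theorem truncation_eq_zero {δ : ℝ} (hδ : 0 < δ) (u : En n → ℝ) {x : En n} (hx : xn x ≤ 2 * δ) :
    truncation δ u x = 0 := by
  rw [truncation, cutoff_eq_zero hδ hx, zero_mul]

theorem truncation_eq_self {δ : ℝ} (hδ : 0 < δ) (u : En n → ℝ) {x : En n} (hx : 3 * δ ≤ xn x) :
    truncation δ u x = u x := by
  rw [truncation, cutoff_eq_one hδ hx, one_mul]

theorem abs_truncation_le (δ : ℝ) (u : En n → ℝ) (x : En n) : |truncation δ u x| ≤ |u x| := by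
  rw [truncation, abs_mul, abs_of_nonneg (cutoff_nonneg _ _)]
  exact mul_le_of_le_one_left (abs_nonneg _) (cutoff_le_one _ _)

theorem abs_sub_truncation_le (δ : ℝ) (u : En n → ℝ) (x : En n) :
    |u x - truncation δ u x| ≤ |u x| := by
  rw [truncation, ← one_sub_mul, abs_mul, abs_of_nonneg (sub_nonneg.2 (cutoff_le_one _ _))]
  exact mul_le_of_le_one_left (abs_nonneg _) (sub_le_self _ (cutoff_nonneg _ _))

namespace AlmostFlatSolution

variable {α δ : ℝ} {Ω : Set (En n)} {u : En n → ℝ} {x : En n}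

theorem continuousOn_truncation (H : AlmostFlatSolution α δ Ω u) (hδ : 0 < δ) :
    ContinuousOn (truncation δ u) (ball 0 1) := by
  intro x hx
  refine ContinuousAt.continuousWithinAt ?_
  rcases lt_or_ge (xn x) (2 * δ) with hlt | hge
  · have hzero : truncation δ u =ᶠ[nhds x] fun _ => 0 := by
      filter_upwards [(isOpen_lt continuous_xn continuous_const).mem_nhds hlt] with y hy
      exact truncation_eq_zero hδ u (le_of_lt hy)
    exact continuousAt_const.congr hzero.symm
  · have hxΩ : x ∈ Ω := H.mem_of_lt_xn (mem_ball_zero_iff.1 hx) (by linarith)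
    have hnhds : closure Ω ∩ ball (0 : En n) 1 ∈ nhds x :=
      Filter.mem_of_superset ((H.isOpen.inter isOpen_ball).mem_nhds ⟨hxΩ, hx⟩)
        (inter_subset_inter_left _ subset_closure)
    exact ((continuous_cutoff δ).comp continuous_xn).continuousAt.mul
      (H.continuousOn.continuousAt hnhds)

theorem abs_truncation_le_mul_xn (H : AlmostFlatSolution α δ Ω u) (hn : 2 ≤ n) (hα : 0 < α)
    (hδ0 : 0 < δ) (hδ1 : δ ≤ 1) (hx : ‖x‖ ≤ 3 / 4) (hxn : 0 ≤ xn x) :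
    |truncation δ u x| ≤ (256 * n + 2) * xn x := by
  rcases le_or_gt (xn x) (2 * δ) with hle | hlt
  · rw [truncation_eq_zero hδ0 u hle, abs_zero]
    positivity
  · have hxΩ : x ∈ Ω := H.mem_of_lt_xn (by linarith) (by linarith)
    have hu := H.abs_le_linear hn hα hδ0.le hδ1 (subset_closure hxΩ) hx
    have hδ_le : (n : ℝ) * δ ≤ n * xn x := by gcongr; linarith
    linarith [abs_truncation_le δ u x]

theorem abs_sub_truncation_le_mul (H : AlmostFlatSolution α δ Ω u) (hn : 2 ≤ n) (hα : 0 < α)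
    (hδ0 : 0 < δ) (hδ1 : δ ≤ 1) (hx : x ∈ closure Ω) (hx_norm : ‖x‖ ≤ 3 / 4) :
    |u x - truncation δ u x| ≤ (512 * n + 2) * δ := by
  rcases le_or_gt (3 * δ) (xn x) with hle | hlt
  · rw [truncation_eq_self hδ0 u hle, sub_self, abs_zero]
    positivity
  · have hu := H.abs_le_linear hn hα hδ0.le hδ1 hx hx_norm
    have hxn_le : (n : ℝ) * xn x ≤ n * (3 * δ) := by gcongr
    linarith [abs_sub_truncation_le δ u x]

end AlmostFlatSolution

end Truncation

section HarmonicApproximation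

variable {n : ℕ} [NeZero n]

theorem exists_odd_harmonic_near_on_half_sphere {r : ℝ} (hr : 0 < r) {ψ : En n → ℝ}
    (hψ : ContinuousOn ψ (sphere 0 r)) (hψ_zero : ∀ x, xn x ≤ 0 → ψ x = 0) {ε : ℝ} (hε : 0 < ε) :
    ∃ h : MvPolynomial (Fin n) ℝ, plap h = 0 ∧ X (lastIdx n) ∣ h ∧
      (∀ x, peval h (reflectLast x) = -peval h x) ∧
      ∀ x, ‖x‖ = r → 0 ≤ xn x → |peval h x - ψ x| ≤ ε := by
  obtain ⟨p, hp⟩ := exists_peval_near_on_compact (isCompact_sphere 0 r) hψ (half_pos hε)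
  obtain ⟨h, hh, hhp⟩ := exists_plap_eq_zero_eq_on_sphere hr p
  have hnear : ∀ x : En n, ‖x‖ = r → |peval h x - ψ x| < ε / 2 := fun x hx => by
    rw [hhp x hx]
    exact hp x (mem_sphere_zero_iff_norm.2 hx)
  refine ⟨h - preflectLast h, plap_sub_preflectLast hh, X_dvd_sub_preflectLast h,
    peval_sub_preflectLast_reflectLast h, fun x hx hxn => ?_⟩
  have hreflect := hnear (reflectLast x) (by rwa [norm_reflectLast])
  rw [hψ_zero (reflectLast x) (by rw [xn_reflectLast]; linarith), sub_zero] at hreflect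
  rw [peval_sub, peval_preflectLast, sub_right_comm]
  linarith [abs_sub (peval h x - ψ x) (peval h (reflectLast x)), hnear x hx]

/-- The constant of the harmonic approximation of an `AlmostFlatSolution`. -/
def approxConst (n : ℕ) : ℝ := 768 * n + 8

theorem one_le_approxConst (n : ℕ) : 1 ≤ approxConst n := by
  rw [approxConst]
  linarith [(n.cast_nonneg : (0 : ℝ) ≤ n)]

/-- `h` is a harmonic polynomial, odd in `x_n`, that approximates `u` up to `approxConst n * δ` in
`Ω ∩ B_{3/4}`. -/
structure IsHarmonicApprox (δ : ℝ) (Ω : Set (En n)) (u : En n → ℝ)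
    (h : MvPolynomial (Fin n) ℝ) : Prop where
  plap_eq_zero : plap h = 0
  X_dvd : X (lastIdx n) ∣ h
  odd : ∀ x, peval h (reflectLast x) = -peval h x
  abs_le : ∀ ⦃x⦄, ‖x‖ ≤ 3 / 4 → |peval h x| ≤ approxConst n
  abs_le_of_abs_xn_le : ∀ ⦃x⦄, ‖x‖ ≤ 3 / 4 → |xn x| ≤ δ → |peval h x| ≤ approxConst n * δ
  abs_sub_le : ∀ ⦃x⦄, x ∈ Ω → ‖x‖ < 3 / 4 → |u x - peval h x| ≤ approxConst n * δ

namespace AlmostFlatSolution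

variable {α δ : ℝ} {Ω : Set (En n)} {u : En n → ℝ}

theorem abs_sub_peval_le_of_boundary (H : AlmostFlatSolution α δ Ω u) (hn : 2 ≤ n) (hα : 0 < α)
    (hδ0 : 0 < δ) (hδ1 : δ ≤ 1) {h : MvPolynomial (Fin n) ℝ}
    (hlinear : ∀ x, ‖x‖ ≤ 3 / 4 → |peval h x| ≤ (256 * n + 2) * |xn x| + δ)
    (hnear : ∀ x, ‖x‖ = 3 / 4 → 0 ≤ xn x → |peval h x - truncation δ u x| ≤ δ) {x : En n}
    (hx : x ∈ closure Ω) (hx_norm : ‖x‖ ≤ 3 / 4) (hx' : ‖x‖ = 3 / 4 ∨ x ∈ frontier Ω) :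
    |u x - peval h x| ≤ (768 * n + 7) * δ := by
  have hx1 : ‖x‖ < 1 := by linarith
  have hnδ : 0 ≤ n * δ := by positivity
  have hstrip : |xn x| ≤ δ → |peval h x| ≤ (256 * n + 3) * δ := fun hxn => by
    have : (256 * (n : ℝ) + 2) * |xn x| ≤ (256 * n + 2) * δ := by gcongr
    linarith [hlinear x hx_norm]
  rcases hx'.symm with hfr | hsphere
  · linarith [abs_sub (u x) (peval h x), hstrip (H.abs_xn_le hfr hx1),
      H.abs_le_of_mem_frontier x ⟨hfr, mem_ball_zero_iff.2 hx1⟩]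
  · rcases le_total 0 (xn x) with hxn | hxn
    · have htriangle := abs_sub_le (u x) (truncation δ u x) (peval h x)
      rw [abs_sub_comm (truncation δ u x)] at htriangle
      linarith [hnear x hsphere hxn, H.abs_sub_truncation_le_mul hn hα hδ0 hδ1 hx hx_norm]
    · have hxn_abs : |xn x| ≤ δ := abs_le.2 ⟨H.neg_le_xn hx hx1, hxn.trans hδ0.le⟩
      have hxn_mul : (n : ℝ) * xn x ≤ 0 := mul_nonpos_of_nonneg_of_nonpos n.cast_nonneg hxn
      linarith [abs_sub (u x) (peval h x), hstrip hxn_abs,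
        H.abs_le_linear hn hα hδ0.le hδ1 hx hx_norm]

theorem exists_isHarmonicApprox (H : AlmostFlatSolution α δ Ω u) (hn : 2 ≤ n) (hα : 0 < α)
    (hδ0 : 0 < δ) (hδ1 : δ ≤ 1) : ∃ h, IsHarmonicApprox δ Ω u h := by
  have hcont : ContinuousOn (truncation δ u) (sphere 0 (3 / 4)) :=
    (H.continuousOn_truncation hδ0).mono
      (sphere_subset_closedBall.trans (closedBall_subset_ball (by norm_num)))
  obtain ⟨h, hh, hdvd, hodd, hnear⟩ := exists_odd_harmonic_near_on_half_sphere
    (by norm_num : (0 : ℝ) < 3 / 4) hcont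
    (fun x hx => truncation_eq_zero hδ0 u (hx.trans (by linarith))) hδ0
  have hlinear : ∀ x : En n, ‖x‖ ≤ 3 / 4 → |peval h x| ≤ (256 * n + 2) * |xn x| + δ := by
    refine fun x hx => abs_peval_le_of_le_half_sphere hh hdvd hodd hδ0.le (fun y hy hyn => ?_) hx
    linarith [abs_sub_abs_le_abs_sub (peval h y) (truncation δ u y), hnear y hy hyn,
      H.abs_truncation_le_mul_xn hn hα hδ0 hδ1 hy.le hyn]
  have hnδ : 0 ≤ n * δ := by positivity
  refine ⟨h, hh, hdvd, hodd, fun x hx => ?_, fun x hx hxn => ?_, fun x hx hx_norm => ?_⟩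
  · have : (256 * (n : ℝ) + 2) * |xn x| ≤ (256 * n + 2) * 1 := by
      gcongr
      linarith [abs_xn_le_norm x]
    rw [approxConst]
    linarith [hlinear x hx, (n.cast_nonneg : (0 : ℝ) ≤ n)]
  · have : (256 * (n : ℝ) + 2) * |xn x| ≤ (256 * n + 2) * δ := by gcongr
    rw [approxConst]
    linarith [hlinear x hx]
  · refine (H.abs_sub_peval_le hn hα hδ0.le hh (by norm_num)
      (fun y => H.abs_sub_peval_le_of_boundary hn hα hδ0 hδ1 hlinear hnear) hx hx_norm).trans_eq ?_
    rw [approxConst]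
    ring

end AlmostFlatSolution

end HarmonicApproximation

section FormApproximation

variable {n : ℕ}

/-- A constant bounding the degree `k + 1` part of a harmonic approximation, and the errors made in
replacing the approximation by this part. -/
def formConst (n k : ℕ) : ℝ :=
  componentConst n (k + 1) * approxConst n / (3 / 4) ^ (k + 1)
    + ∑ j ∈ Finset.range (k + 1), componentConst n j * 2
    + n ^ (k + 2) * interiorConst n (k + 2) * approxConst n / (3 / 4) ^ (k + 2)

theorem formConst_summands_nonneg (n k : ℕ) :
    0 ≤ componentConst n (k + 1) * approxConst n / (3 / 4) ^ (k + 1) ∧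
      0 ≤ ∑ j ∈ Finset.range (k + 1), componentConst n j * 2 ∧
      0 ≤ n ^ (k + 2) * interiorConst n (k + 2) * approxConst n / (3 / 4) ^ (k + 2) := by
  have hcomponent := componentConst_nonneg n
  have hinterior := (interiorConst_pos n (k + 2)).le
  have happrox := zero_le_one.trans (one_le_approxConst n)
  exact ⟨div_nonneg (mul_nonneg (hcomponent _) happrox) (by positivity),
    Finset.sum_nonneg fun j _ => mul_nonneg (hcomponent j) zero_le_two, by positivity⟩

theorem formConst_nonneg (n k : ℕ) : 0 ≤ formConst n k := by
  obtain ⟨hleading, hlower, hremainder⟩ := formConst_summands_nonneg n k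
  exact add_nonneg (add_nonneg hleading hlower) hremainder

theorem componentConst_mul_le_formConst (n k : ℕ) :
    componentConst n (k + 1) * approxConst n / (3 / 4) ^ (k + 1) ≤ formConst n k := by
  obtain ⟨-, hlower, hremainder⟩ := formConst_summands_nonneg n k
  rw [formConst]
  linarith

theorem sum_componentConst_le_formConst (n k : ℕ) :
    ∑ j ∈ Finset.range (k + 1), componentConst n j * 2 ≤ formConst n k := by
  obtain ⟨hleading, -, hremainder⟩ := formConst_summands_nonneg n k
  rw [formConst]
  linarith

theorem interiorConst_mul_le_formConst (n k : ℕ) :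
    n ^ (k + 2) * interiorConst n (k + 2) * approxConst n / (3 / 4) ^ (k + 2)
      ≤ formConst n k := by
  obtain ⟨hleading, hlower, -⟩ := formConst_summands_nonneg n k
  rw [formConst]
  linarith

variable [NeZero n] {α δ s N : ℝ} {k : ℕ} {Ω : Set (En n)} {u : En n → ℝ}
  {h : MvPolynomial (Fin n) ℝ}

namespace IsHarmonicApprox

theorem abs_le_mul_rpow (hh : IsHarmonicApprox δ Ω u h) (hΩ : IsNearlyFlat δ Ω) (hα : 0 < α)
    (hs : s ≤ 1 / 2) (hN : 1 ≤ N) (hδs : approxConst n * δ ≤ s ^ ((k : ℝ) + α))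
    (hu : ∀ x ∈ Ω ∩ ball (0 : En n) 1, |u x| ≤ N * ‖x‖ ^ ((k : ℝ) + α)) {x : En n}
    (hx : ‖x‖ ≤ s) : |peval h x| ≤ 2 * N * s ^ ((k : ℝ) + α) := by
  have hs0 : 0 ≤ s := (norm_nonneg x).trans hx
  have hrpow : 0 ≤ s ^ ((k : ℝ) + α) := Real.rpow_nonneg hs0 _
  wlog hxn : 0 ≤ xn x generalizing x
  · have := this (x := reflectLast x) (by rwa [norm_reflectLast])
      (by rw [xn_reflectLast]; linarith)
    rwa [hh.odd, abs_neg] at this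
  have hN_le : s ^ ((k : ℝ) + α) ≤ N * s ^ ((k : ℝ) + α) := le_mul_of_one_le_left hrpow hN
  rcases le_or_gt (xn x) δ with hle | hlt
  · linarith [hh.abs_le_of_abs_xn_le (x := x) (by linarith) (by rwa [abs_of_nonneg hxn])]
  · have hxΩ : x ∈ Ω := hΩ.mem_of_lt_xn (by linarith) hlt
    have hux : |u x| ≤ N * s ^ ((k : ℝ) + α) :=
      (hu x ⟨hxΩ, mem_ball_zero_iff.2 (by linarith)⟩).trans (by gcongr)
    linarith [abs_sub_abs_le_abs_sub (peval h x) (u x), abs_sub_comm (u x) (peval h x),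
      hh.abs_sub_le hxΩ (by linarith)]

end IsHarmonicApprox

theorem abs_peval_taylorPoly_le_of_abs_le_rpow (hs0 : 0 < s) (hs1 : s ≤ 1) (hN : 0 ≤ N)
    (hh : plap h = 0) (hb : ∀ x : En n, ‖x‖ ≤ s → |peval h x| ≤ 2 * N * s ^ ((k : ℝ) + α))
    {x : En n} (hx : ‖x‖ ≤ 1) :
    |peval (taylorPoly (k + 1) h) x|
      ≤ (∑ j ∈ Finset.range (k + 1), componentConst n j * 2) * N * s ^ α := by
  rw [taylorPoly, peval_sum, Finset.sum_mul, Finset.sum_mul]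
  refine (Finset.abs_sum_le_sum_abs _ _).trans (Finset.sum_le_sum fun j hj => ?_)
  have hdiv : s ^ ((k : ℝ) + α) / s ^ j ≤ s ^ α := by
    rw [div_le_iff₀ (by positivity), ← Real.rpow_natCast, ← Real.rpow_add hs0]
    refine Real.rpow_le_rpow_of_exponent_ge hs0 hs1 ?_
    have : (j : ℝ) ≤ k := Nat.cast_le.2 (Finset.mem_range_succ_iff.1 hj)
    linarith
  have hconst := componentConst_nonneg n j
  calc |peval (homogeneousComponent j h) x|
      ≤ pnorm (homogeneousComponent j h) * ‖x‖ ^ j :=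
        abs_peval_le_of_isHomogeneous (homogeneousComponent_isHomogeneous j h) x
    _ ≤ pnorm (homogeneousComponent j h) :=
        mul_le_of_le_one_right (pnorm_nonneg _) (pow_le_one₀ (norm_nonneg _) hx)
    _ ≤ componentConst n j * (2 * N * s ^ ((k : ℝ) + α)) / s ^ j :=
        pnorm_homogeneousComponent_le hs0 (by positivity) hh hb j
    _ = componentConst n j * 2 * N * (s ^ ((k : ℝ) + α) / s ^ j) := by ring
    _ ≤ componentConst n j * 2 * N * s ^ α := by gcongr

/-- `q` is a harmonic `(k + 1)`-form of norm at most `formConst n k`. The vanishing of `q` on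
`x_n = 0` is expressed by divisibility. -/
structure IsBoundedHarmonicForm (k : ℕ) (q : MvPolynomial (Fin n) ℝ) : Prop where
  isHomogeneous : q.IsHomogeneous (k + 1)
  plap_eq_zero : plap q = 0
  X_dvd : X (lastIdx n) ∣ q
  pnorm_le : pnorm q ≤ formConst n k

theorem IsHarmonicApprox.isBoundedHarmonicForm (hh : IsHarmonicApprox δ Ω u h) (k : ℕ) :
    IsBoundedHarmonicForm k (homogeneousComponent (k + 1) h) where
  isHomogeneous := homogeneousComponent_isHomogeneous _ _
  plap_eq_zero := plap_homogeneousComponent _ hh.plap_eq_zero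
  X_dvd := X_dvd_homogeneousComponent hh.X_dvd _
  pnorm_le := (pnorm_homogeneousComponent_le (by norm_num)
    (zero_le_one.trans (one_le_approxConst n)) hh.plap_eq_zero (fun _ hx => hh.abs_le hx)
    (k + 1)).trans (componentConst_mul_le_formConst n k)

theorem IsHarmonicApprox.abs_sub_homogeneousComponent_le (hh : IsHarmonicApprox δ Ω u h)
    (hs0 : 0 < s) (hs1 : s ≤ 1) (hN : 0 ≤ N)
    (hb : ∀ x : En n, ‖x‖ ≤ s → |peval h x| ≤ 2 * N * s ^ ((k : ℝ) + α)) {x : En n} (hxΩ : x ∈ Ω)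
    (hx : ‖x‖ ≤ 3 / 4 / 2 ^ (k + 2)) :
    |u x - peval (homogeneousComponent (k + 1) h) x|
      ≤ approxConst n * δ + formConst n k * N * s ^ α + formConst n k * ‖x‖ ^ (k + 2) := by
  have hx34 : ‖x‖ < 3 / 4 :=
    hx.trans_lt (div_lt_self (by norm_num) (one_lt_pow₀ one_lt_two (by lia)))
  have hlower : |peval (taylorPoly (k + 1) h) x| ≤ formConst n k * N * s ^ α :=
    (abs_peval_taylorPoly_le_of_abs_le_rpow hs0 hs1 hN hh.plap_eq_zero hb (by linarith)).trans
      (by gcongr; exact sum_componentConst_le_formConst n k)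
  have hremainder : |peval (h - taylorPoly (k + 2) h) x| ≤ formConst n k * ‖x‖ ^ (k + 2) :=
    (abs_peval_sub_taylorPoly_le (by norm_num) (zero_le_one.trans (one_le_approxConst n))
      hh.plap_eq_zero (fun y hy => hh.abs_le hy) hx).trans
      (by gcongr; exact interiorConst_mul_le_formConst n k)
  have hdecomp : u x - peval (homogeneousComponent (k + 1) h) x
      = (u x - peval h x) + peval (taylorPoly (k + 1) h) x
        + peval (h - taylorPoly (k + 2) h) x := by
    rw [taylorPoly, taylorPoly, Finset.sum_range_succ _ (k + 1)]
    simp only [peval_sub, peval_add]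
    ring
  rw [hdecomp]
  exact (abs_add_three _ _ _).trans
    (add_le_add (add_le_add (hh.abs_sub_le hxΩ hx34) hlower) hremainder)

theorem AlmostFlatSolution.exists_form_near (H : AlmostFlatSolution α δ Ω u) (hn : 2 ≤ n)
    (hα : 0 < α) (hδ0 : 0 < δ) (hδ1 : δ ≤ 1) (hs0 : 0 < s) (hs : s ≤ 1 / 2) (hN : 1 ≤ N)
    (hδs : approxConst n * δ ≤ s ^ ((k : ℝ) + α))
    (hu : ∀ x ∈ Ω ∩ ball (0 : En n) 1, |u x| ≤ N * ‖x‖ ^ ((k : ℝ) + α)) :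
    ∃ q, IsBoundedHarmonicForm k q ∧ ∀ x ∈ Ω, ‖x‖ ≤ 3 / 4 / 2 ^ (k + 2) →
      |u x - peval q x|
        ≤ approxConst n * δ + formConst n k * N * s ^ α + formConst n k * ‖x‖ ^ (k + 2) := by
  obtain ⟨h, hh⟩ := H.exists_isHarmonicApprox hn hα hδ0 hδ1
  exact ⟨homogeneousComponent (k + 1) h, hh.isBoundedHarmonicForm k, fun x =>
    hh.abs_sub_homogeneousComponent_le hs0 (by linarith) (by linarith)
      fun y => hh.abs_le_mul_rpow H.toIsNearlyFlat hα hs hN hδs hu⟩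

end FormApproximation

/-! ### A universal rate of decay -/

section RealLemmas

theorem exists_mem_Ioc_mul_rpow_le {a b ε : ℝ} (ha : 0 < a) (hb : 0 < b) (K : ℝ) (hε : 0 < ε) :
    ∃ s ∈ Ioc 0 b, K * s ^ a ≤ ε := by
  have hcont : ContinuousAt (fun s : ℝ => K * s ^ a) 0 :=
    continuousAt_const.mul (Real.continuousAt_rpow_const 0 a (Or.inr ha.le))
  have hlt : ∀ᶠ s in nhds (0 : ℝ), K * s ^ a < ε :=
    hcont.eventually_lt continuousAt_const (by rwa [Real.zero_rpow ha.ne', mul_zero])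
  obtain ⟨s, hs, hsb⟩ := ((hlt.filter_mono nhdsWithin_le_nhds).and (Ioc_mem_nhdsGT hb)).exists
  exact ⟨s, hsb, hs.le⟩

theorem pow_succ_eq_rpow_mul {ρ : ℝ} (hρ : 0 < ρ) (m : ℕ) (α : ℝ) :
    ρ ^ (m + 1) = ρ ^ ((m : ℝ) + α) * ρ ^ (1 - α) := by
  rw [← Real.rpow_add hρ, ← Real.rpow_natCast]
  congr 1
  push_cast
  ring

theorem exists_approximation_parameters {α b c δ₁ : ℝ} (hα0 : 0 < α) (hα1 : α < 1) (hb : 0 < b)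
    (hc : 0 < c) (hδ₁ : 0 < δ₁) (m : ℕ) (γ K₁ K₂ K₃ : ℝ) :
    ∃ ρ ∈ Ioc 0 b, ∃ s ∈ Ioc (0 : ℝ) (1 / 2), ∃ δ ∈ Ioc 0 δ₁, K₁ * δ ≤ s ^ γ ∧
      c * (K₁ * δ + K₂ * s ^ α + K₃ * ρ ^ (m + 1)) ≤ ρ ^ ((m : ℝ) + α) := by
  obtain ⟨ρ, hρ, hρK⟩ := exists_mem_Ioc_mul_rpow_le (sub_pos.2 hα1) hb K₃
    (by positivity : 0 < 1 / (3 * c))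
  have hρ_rpow : 0 < ρ ^ ((m : ℝ) + α) := Real.rpow_pos_of_pos hρ.1 _
  obtain ⟨s, hs, hsK⟩ := exists_mem_Ioc_mul_rpow_le hα0 one_half_pos K₂
    (by positivity : 0 < ρ ^ ((m : ℝ) + α) / (3 * c))
  obtain ⟨δ, hδ, hδK⟩ := exists_mem_Ioc_mul_rpow_le one_pos hδ₁ K₁
    (lt_min (Real.rpow_pos_of_pos hs.1 γ)
      (by positivity : 0 < ρ ^ ((m : ℝ) + α) / (3 * c)))
  rw [Real.rpow_one, le_min_iff] at hδK
  refine ⟨ρ, hρ, s, hs, δ, hδ, hδK.1, ?_⟩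
  have hρ_le : K₃ * ρ ^ (m + 1) ≤ ρ ^ ((m : ℝ) + α) * (1 / (3 * c)) := by
    rw [pow_succ_eq_rpow_mul hρ.1 m α, mul_left_comm]
    gcongr
  calc c * (K₁ * δ + K₂ * s ^ α + K₃ * ρ ^ (m + 1))
      ≤ c * (ρ ^ ((m : ℝ) + α) / (3 * c) + ρ ^ ((m : ℝ) + α) / (3 * c)
          + ρ ^ ((m : ℝ) + α) * (1 / (3 * c))) := by
        gcongr
        exact hδK.2
    _ = ρ ^ ((m : ℝ) + α) := by
        field_simp
        norm_num

theorem of_halving {p : ℝ → Prop} {a b : ℝ} (ha : 0 < a) (hmono : Monotone p)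
    (hhalf : ∀ t, a ≤ t → p t → p (t / 2)) (hb : p b) : p a := by
  obtain ⟨j, hj⟩ := pow_unbounded_of_one_lt (b / a) one_lt_two
  rw [div_lt_iff₀ ha] at hj
  induction j generalizing b with
  | zero => exact hmono (by linarith) hb
  | succ j ih =>
    rcases le_total b a with hle | hle
    · exact hmono hle hb
    · refine ih (hhalf b hle hb) ?_
      rw [pow_succ] at hj
      linarith

end RealLemmas

section Rescaling

variable {n : ℕ}

/-- The rescaling of `u` to the unit ball from the ball of radius `R`, normalized so that
`|u x| ≤ N |x|^γ` becomes `|rescale γ N R u y| ≤ |y|^γ`. -/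
def rescale (γ N R : ℝ) (u : En n → ℝ) (y : En n) : ℝ := (N * R ^ γ)⁻¹ * u (R • y)

variable {γ N R M : ℝ} {u : En n → ℝ} {y : En n}

theorem abs_rescale_le (hN : 0 < N) (hR : 0 < R) (hu : |u (R • y)| ≤ M * ‖R • y‖ ^ γ) :
    |rescale γ N R u y| ≤ M / N * ‖y‖ ^ γ := by
  have hRγ : 0 < R ^ γ := Real.rpow_pos_of_pos hR γ
  rw [norm_smul, Real.norm_of_nonneg hR.le, Real.mul_rpow hR.le (norm_nonneg y)] at hu
  rw [rescale, abs_mul, abs_of_pos (inv_pos.2 (mul_pos hN hRγ)), inv_mul_le_iff₀ (mul_pos hN hRγ)]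
  refine hu.trans_eq ?_
  field_simp

theorem smul_mem_unit_ball (hR0 : 0 ≤ R) (hR1 : R ≤ 1) (hy : y ∈ ball 0 1) : R • y ∈ ball 0 1 := by
  rw [mem_ball_zero_iff] at hy ⊢
  rw [norm_smul, Real.norm_of_nonneg hR0]
  exact mul_lt_one_of_nonneg_of_lt_one_right hR1 (norm_nonneg y) hy

theorem abs_rescale_le_rpow {Ω : Set (En n)} (hN : 0 < N) (hR0 : 0 < R) (hR1 : R ≤ 1)
    (hu : ∀ x ∈ Ω ∩ ball (0 : En n) 1, |u x| ≤ N * ‖x‖ ^ γ) :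
    ∀ y ∈ (R • ·) ⁻¹' Ω ∩ ball (0 : En n) 1, |rescale γ N R u y| ≤ ‖y‖ ^ γ := fun y hy => by
  simpa only [div_self hN.ne', one_mul] using
    abs_rescale_le hN hR0 (hu (R • y) ⟨hy.1, smul_mem_unit_ball hR0.le hR1 hy.2⟩)

theorem HasLaplacianAt.exists_rescale {L : ℝ} (hL : HasLaplacianAt u L (R • y)) (hN : 0 < N)
    (hR : 0 < R) (hLM : |L| ≤ M * ‖R • y‖ ^ (γ - 2)) :
    ∃ L', |L'| ≤ M / N * ‖y‖ ^ (γ - 2) ∧ HasLaplacianAt (rescale γ N R u) L' y := by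
  refine ⟨_, ?_, (hL.comp_const_smul R).const_mul _⟩
  have hRγ : 0 < R ^ γ := Real.rpow_pos_of_pos hR γ
  rw [norm_smul, Real.norm_of_nonneg hR.le, Real.mul_rpow hR.le (norm_nonneg y),
    Real.rpow_sub hR, Real.rpow_two] at hLM
  rw [abs_mul, abs_mul, abs_of_pos (inv_pos.2 (mul_pos hN hRγ)), abs_of_pos (pow_pos hR 2),
    inv_mul_le_iff₀ (mul_pos hN hRγ)]
  calc R ^ 2 * |L| ≤ R ^ 2 * (M * (R ^ γ / R ^ 2 * ‖y‖ ^ (γ - 2))) := by gcongr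
    _ = N * R ^ γ * (M / N * ‖y‖ ^ (γ - 2)) := by field_simp

variable [NeZero n]

theorem xpn_le_norm (x : En n) : xpn x ≤ ‖x‖ := by
  rw [EuclideanSpace.norm_eq, xpn]
  simp only [Real.norm_eq_abs, sq_abs]
  exact Real.sqrt_le_sqrt (Finset.sum_le_sum_of_subset_of_nonneg (Finset.erase_subset _ _)
    fun i _ _ => sq_nonneg _)

theorem xpn_rpow_le {α : ℝ} (hα : 0 ≤ α) (hR : R ≤ 1) {x : En n} (hx : ‖x‖ ≤ R) :
    xpn x ^ ((1 : ℝ) + α) ≤ R := by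
  have hR0 : 0 ≤ R := (norm_nonneg x).trans hx
  calc xpn x ^ ((1 : ℝ) + α) ≤ R ^ ((1 : ℝ) + α) :=
        Real.rpow_le_rpow (Real.sqrt_nonneg _) ((xpn_le_norm x).trans hx) (by linarith)
    _ ≤ R ^ (1 : ℝ) := Real.rpow_le_rpow_of_exponent_ge' hR0 hR zero_le_one (by linarith)
    _ = R := Real.rpow_one R

theorem isNearlyFlat_preimage_smul {α δ δ' : ℝ} {Ω : Set (En n)} (hΩ : IsOpen Ω)
    (hzero : (0 : En n) ∉ Ω) (hflat : Domain1α α δ Ω) (hα : 0 ≤ α) (hδ : 0 ≤ δ) (hδ' : δ ≤ δ')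
    (hR0 : 0 < R) (hR1 : R ≤ 1) : IsNearlyFlat δ' ((R • ·) ⁻¹' Ω) := by
  have hnorm : ∀ y : En n, ‖y‖ < 1 → ‖R • y‖ < R := fun y hy => by
    rw [norm_smul, Real.norm_of_nonneg hR0.le]
    exact mul_lt_of_lt_one_right hR0 hy
  have hgraph : ∀ y : En n, ‖y‖ < 1 → δ * xpn (R • y) ^ ((1 : ℝ) + α) ≤ R * δ' := fun y hy =>
    calc δ * xpn (R • y) ^ ((1 : ℝ) + α) ≤ δ * R := by
          gcongr
          exact xpn_rpow_le hα hR1 (hnorm y hy).le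
      _ ≤ R * δ' := by rw [mul_comm]; gcongr
  have hxn : ∀ y : En n, xn (R • y) = R * xn y := fun y => rfl
  refine ⟨hΩ.preimage (continuous_const_smul R), by simpa using hzero, fun y hy hlt => ?_,
    fun y hy hlt => ?_⟩
  · refine hflat.1 (R • y) ((hnorm y hy).trans_le hR1) ((hgraph y hy).trans_lt ?_)
    rw [hxn]
    gcongr
  · refine hflat.2 (R • y) ((hnorm y hy).trans_le hR1) (lt_of_lt_of_le ?_
      (neg_le_neg (hgraph y hy)))
    rw [hxn, ← mul_neg]
    gcongr

end Rescaling

section Decay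

variable {n : ℕ} [NeZero n]

/-- `u` is bounded by `1` and solves a Dirichlet problem near a pointwise `C^{1,α}` boundary point,
with data compatible with decay of order `γ` at that point. -/
structure DecayingDataSolution (γ α δ : ℝ) (Ω : Set (En n)) (u : En n → ℝ) : Prop where
  isOpen : IsOpen Ω
  zero_notMem : (0 : En n) ∉ Ω
  flat : Domain1α α δ Ω
  continuousOn : ContinuousOn u (closure Ω ∩ ball 0 1)
  exists_hasLaplacianAt : ∀ x ∈ Ω ∩ ball 0 1, ∃ L, |L| ≤ 2 * ‖x‖ ^ (γ - 2) ∧ HasLaplacianAt u L x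
  abs_le_one : ∀ x ∈ Ω ∩ ball 0 1, |u x| ≤ 1
  abs_le_of_mem_frontier : ∀ x ∈ frontier Ω ∩ ball 0 1, |u x| ≤ δ * ‖x‖ ^ γ

variable {γ α δ δ' N R ρ : ℝ} {k : ℕ} {Ω : Set (En n)} {u : En n → ℝ}

theorem DecayingDataSolution.almostFlatSolution_rescale (H : DecayingDataSolution γ α δ Ω u)
    (hα : 0 ≤ α) (hγ : 1 + α ≤ γ) (hδ : 0 ≤ δ) (hδ' : δ ≤ δ') (hN : 1 ≤ N) (hN' : 2 / N ≤ δ')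
    (hR0 : 0 < R) (hR1 : R ≤ 1) (hu : ∀ x ∈ Ω ∩ ball (0 : En n) 1, |u x| ≤ N * ‖x‖ ^ γ) :
    AlmostFlatSolution α δ' ((R • ·) ⁻¹' Ω) (rescale γ N R u) := by
  have hball : ∀ {y : En n}, y ∈ ball 0 1 → R • y ∈ ball 0 1 := smul_mem_unit_ball hR0.le hR1
  have hN0 : 0 < N := by linarith
  have hrpow_le : ∀ {y : En n}, y ∈ ball 0 1 → ‖y‖ ^ γ ≤ 1 := fun hy =>
    Real.rpow_le_one (norm_nonneg _) (mem_ball_zero_iff.1 hy).le (by linarith)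
  have hflat := isNearlyFlat_preimage_smul H.isOpen H.zero_notMem H.flat hα hδ hδ' hR0 hR1
  refine ⟨hflat, ?_, fun y hy => ?_, fun y hy => ?_, fun y hy => ?_⟩
  · refine continuousOn_const.mul (H.continuousOn.comp
      (continuous_const_smul R).continuousOn fun y hy => ⟨?_, hball hy.2⟩)
    exact (continuous_const_smul R).closure_preimage_subset Ω hy.1
  · obtain ⟨L, hL, hLy⟩ := H.exists_hasLaplacianAt (R • y) ⟨hy.1, hball hy.2⟩
    obtain ⟨L', hL', hLy'⟩ := hLy.exists_rescale hN0 hR0 hL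
    refine ⟨L', hL'.trans (mul_le_mul hN' ?_ (by positivity) (hδ.trans hδ')), hLy'⟩
    have hy0 : y ≠ 0 := fun h => hflat.zero_notMem (h ▸ hy.1)
    exact Real.rpow_le_rpow_of_exponent_ge (norm_pos_iff.2 hy0) (mem_ball_zero_iff.1 hy.2).le
      (by linarith)
  · exact (abs_rescale_le_rpow hN0 hR0 hR1 hu y hy).trans (hrpow_le hy.2)
  · have hfr : R • y ∈ frontier Ω :=
      (continuous_const_smul R).frontier_preimage_subset Ω hy.1
    calc |rescale γ N R u y| ≤ δ / N * ‖y‖ ^ γ :=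
          abs_rescale_le hN0 hR0 (H.abs_le_of_mem_frontier _ ⟨hfr, hball hy.2⟩)
      _ ≤ δ * 1 := by
          gcongr
          · exact div_le_self hδ hN
          · exact hrpow_le hy.2
      _ ≤ δ' := by rwa [mul_one]

theorem exists_improvement (hn : 2 ≤ n) (hα0 : 0 < α) (hα1 : α < 1) (k : ℕ) :
    ∃ ρ δ : ℝ, 0 < ρ ∧ 0 < δ ∧
      ∀ (Ω : Set (En n)) (u : En n → ℝ), AlmostFlatSolution α δ Ω u →
        (∀ x ∈ Ω ∩ ball (0 : En n) 1, |u x| ≤ ‖x‖ ^ ((k : ℝ) + α)) →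
        ∀ x ∈ Ω, ‖x‖ = ρ → |u x| ≤ ρ ^ ((k : ℝ) + α) / 2 := by
  obtain ⟨ρ, ⟨hρ0, hρ⟩, s, ⟨hs0, hs⟩, δ, ⟨hδ0, hδ1⟩, hδs, hparam⟩ :=
    exists_approximation_parameters hα0 hα1 (by positivity : (0 : ℝ) < 3 / 4 / 2 ^ (k + 2))
      two_pos one_pos k ((k : ℝ) + α) (approxConst n) (formConst n k * 1) (2 * formConst n k)
  have hρ1 : ρ ≤ 1 :=
    hρ.trans ((div_le_self (by norm_num) (one_le_pow₀ one_le_two)).trans (by norm_num))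
  refine ⟨ρ, δ, hρ0, hδ0, fun Ω u H hu x hxΩ hx => ?_⟩
  obtain ⟨q, hq, hnear⟩ := H.exists_form_near (N := 1) hn hα0 hδ0 hδ1 hs0 hs le_rfl hδs
    (by simpa only [one_mul] using hu)
  have hux := hnear x hxΩ (hx ▸ hρ)
  have hqx : |peval q x| ≤ formConst n k * ρ ^ (k + 1) := by
    rw [← hx]
    exact (abs_peval_le_of_isHomogeneous hq.isHomogeneous x).trans (by gcongr; exact hq.pnorm_le)
  have hpow : formConst n k * ρ ^ (k + 2) ≤ formConst n k * ρ ^ (k + 1) :=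
    mul_le_mul_of_nonneg_left (pow_le_pow_of_le_one hρ0.le hρ1 (by lia)) (formConst_nonneg n k)
  rw [hx] at hux
  linarith [abs_sub_abs_le_abs_sub (u x) (peval q x)]

theorem DecayingDataSolution.abs_le_half (H : DecayingDataSolution γ α δ Ω u) (hα : 0 ≤ α)
    (hγ : 1 + α ≤ γ) (hδ : 0 ≤ δ) (hδ' : δ ≤ δ') (hρ : 0 < ρ) (hN : 1 ≤ N) (hN' : 2 / N ≤ δ')
    (hNρ : 1 ≤ N / 2 * ρ ^ γ)
    (himprove : ∀ (Ω : Set (En n)) (u : En n → ℝ), AlmostFlatSolution α δ' Ω u →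
      (∀ x ∈ Ω ∩ ball (0 : En n) 1, |u x| ≤ ‖x‖ ^ γ) → ∀ x ∈ Ω, ‖x‖ = ρ → |u x| ≤ ρ ^ γ / 2)
    (hu : ∀ x ∈ Ω ∩ ball (0 : En n) 1, |u x| ≤ N * ‖x‖ ^ γ) :
    ∀ x ∈ Ω ∩ ball (0 : En n) 1, |u x| ≤ N / 2 * ‖x‖ ^ γ := by
  intro x hx
  have hN0 : 0 < N := by linarith
  rcases le_or_gt ρ ‖x‖ with hρx | hxρ
  · refine (H.abs_le_one x hx).trans (hNρ.trans ?_)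
    gcongr
    linarith
  · have hx0 : 0 < ‖x‖ := norm_pos_iff.2 fun h => H.zero_notMem (h ▸ hx.1)
    set R := ‖x‖ / ρ with hR
    have hR0 : 0 < R := by positivity
    have hR1 : R ≤ 1 := (div_le_one hρ).2 hxρ.le
    have hRx : R • R⁻¹ • x = x := smul_inv_smul₀ hR0.ne' x
    have hnorm : ‖R⁻¹ • x‖ = ρ := by
      rw [norm_smul, norm_inv, Real.norm_of_nonneg hR0.le, hR]
      field_simp
    have hRγ : 0 < R ^ γ := Real.rpow_pos_of_pos hR0 γ
    have hle := himprove _ _ (H.almostFlatSolution_rescale hα hγ hδ hδ' hN hN' hR0 hR1 hu)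
      (abs_rescale_le_rpow hN0 hR0 hR1 hu) (R⁻¹ • x) (by rw [mem_preimage, hRx]; exact hx.1) hnorm
    rw [rescale, hRx, abs_mul, abs_of_pos (inv_pos.2 (mul_pos hN0 hRγ)),
      inv_mul_le_iff₀ (mul_pos hN0 hRγ)] at hle
    have hRρ : R ^ γ * ρ ^ γ = ‖x‖ ^ γ := by
      rw [← Real.mul_rpow hR0.le hρ.le, hR, div_mul_cancel₀ _ hρ.ne']
    refine hle.trans_eq ?_
    rw [← hRρ]
    ring

theorem exists_universal_decay (hn : 2 ≤ n) (hk : 1 ≤ k) (hα0 : 0 < α) (hα1 : α < 1) :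
    ∃ δ₁ N₁ : ℝ, 0 < δ₁ ∧ 1 ≤ N₁ ∧
      ∀ (δ Ku : ℝ) (Ω : Set (En n)) (u : En n → ℝ), 0 ≤ δ → δ ≤ δ₁ →
        DecayingDataSolution ((k : ℝ) + α) α δ Ω u →
        (∀ x ∈ Ω ∩ ball (0 : En n) 1, |u x| ≤ Ku * ‖x‖ ^ ((k : ℝ) + α)) →
        ∀ x ∈ Ω ∩ ball (0 : En n) 1, |u x| ≤ N₁ * ‖x‖ ^ ((k : ℝ) + α) := by
  obtain ⟨ρ, δ₁, hρ, hδ₁, himprove⟩ := exists_improvement (n := n) hn hα0 hα1 k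
  have hργ : 0 < ρ ^ ((k : ℝ) + α) := Real.rpow_pos_of_pos hρ _
  have hk1 : (1 : ℝ) ≤ k := Nat.one_le_cast.2 hk
  refine ⟨δ₁, 1 + 2 / δ₁ + 2 / ρ ^ ((k : ℝ) + α), hδ₁,
    by linarith [div_pos two_pos hδ₁, div_pos two_pos hργ], fun δ Ku Ω u hδ0 hδ H hu => ?_⟩
  refine of_halving (p := fun N => ∀ x ∈ Ω ∩ ball (0 : En n) 1, |u x| ≤ N * ‖x‖ ^ ((k : ℝ) + α))
    (by positivity) (fun s t hst hs x hx => (hs x hx).trans (by gcongr)) (fun N hN hu => ?_) hu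
  have hNδ : 2 / δ₁ ≤ N := by linarith [div_pos two_pos hργ]
  have hNρ : 2 / ρ ^ ((k : ℝ) + α) ≤ N := by linarith [div_pos two_pos hδ₁]
  have hN1 : 1 ≤ N := by linarith [div_pos two_pos hργ, div_pos two_pos hδ₁]
  refine H.abs_le_half hα0.le (by linarith) hδ0 hδ hρ hN1 ?_ ?_ himprove hu
  · rwa [div_le_iff₀ (by linarith), mul_comm, ← div_le_iff₀ hδ₁]
  · rw [div_le_iff₀ hργ] at hNρ
    linarith

end Decay

/-! ### Approximation by a form -/

section FormCorrection

variable {n : ℕ} [NeZero n]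

/-- `u` is bounded by `1` and solves `Δu + P = f`, `u = g`, where `f` and `g` decay to the orders
`k - 2 + α` and `k + α` with constant `δ`, near a boundary point that is `C^{1,α}` with the same
constant; moreover `P` is homogeneous of degree `k - 1` and has norm at most `1`. -/
structure PolynomialSourceSolution (k : ℕ) (α δ : ℝ) (Ω : Set (En n)) (u : En n → ℝ)
    (P : MvPolynomial (Fin n) ℝ) : Prop where
  isOpen : IsOpen Ω
  zero_notMem : (0 : En n) ∉ Ω
  flat : Domain1α α δ Ω
  isHomogeneous : P.IsHomogeneous (k - 1)
  pnorm_le_one : pnorm P ≤ 1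
  continuousOn : ContinuousOn u (closure Ω ∩ ball 0 1)
  exists_hasLaplacianAt : ∀ x ∈ Ω ∩ ball 0 1,
    ∃ L, |L + peval P x| ≤ δ * ‖x‖ ^ ((k : ℝ) - 2 + α) ∧ HasLaplacianAt u L x
  abs_le_one : ∀ x ∈ Ω ∩ ball 0 1, |u x| ≤ 1
  abs_le_of_mem_frontier : ∀ x ∈ frontier Ω ∩ ball 0 1, |u x| ≤ δ * ‖x‖ ^ ((k : ℝ) + α)

namespace PolynomialSourceSolution

variable {k : ℕ} {α δ K N : ℝ} {Ω : Set (En n)} {u : En n → ℝ} {P Q : MvPolynomial (Fin n) ℝ}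

theorem norm_pos (H : PolynomialSourceSolution k α δ Ω u P) {x : En n} (hx : x ∈ Ω) : 0 < ‖x‖ :=
  norm_pos_iff.2 fun h => H.zero_notMem (h ▸ hx)

theorem isNearlyFlat (H : PolynomialSourceSolution k α δ Ω u P) (hα : 0 ≤ α) (hδ : 0 ≤ δ) :
    IsNearlyFlat δ Ω := by
  simpa using
    isNearlyFlat_preimage_smul H.isOpen H.zero_notMem H.flat hα hδ le_rfl one_pos le_rfl

theorem decayingDataSolution (H : PolynomialSourceSolution k α δ Ω u P) (hk : 1 ≤ k) (hα : α ≤ 1)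
    (hδ : δ ≤ 1) : DecayingDataSolution ((k : ℝ) + α) α δ Ω u where
  isOpen := H.isOpen
  zero_notMem := H.zero_notMem
  flat := H.flat
  continuousOn := H.continuousOn
  abs_le_one := H.abs_le_one
  abs_le_of_mem_frontier := H.abs_le_of_mem_frontier
  exists_hasLaplacianAt x hx := by
    obtain ⟨L, hL, hLx⟩ := H.exists_hasLaplacianAt x hx
    refine ⟨L, ?_, hLx⟩
    have hPx : |peval P x| ≤ 1 * ‖x‖ ^ ((k : ℝ) - 2 + α) := by
      refine (abs_peval_le_of_isHomogeneous H.isHomogeneous x).trans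
        (mul_le_mul H.pnorm_le_one ?_ (by positivity) zero_le_one)
      rw [← Real.rpow_natCast, Nat.cast_sub hk, Nat.cast_one]
      exact Real.rpow_le_rpow_of_exponent_ge (H.norm_pos hx.1) (mem_ball_zero_iff.1 hx.2).le
        (by linarith)
    have hδ_le : δ * ‖x‖ ^ ((k : ℝ) - 2 + α) ≤ 1 * ‖x‖ ^ ((k : ℝ) - 2 + α) := by gcongr
    rw [add_sub_right_comm]
    linarith [abs_sub_abs_le_abs_sub L (-peval P x), abs_neg (peval P x),
      congrArg abs (sub_neg_eq_add L (peval P x))]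

theorem almostFlatSolution_sub_form (H : PolynomialSourceSolution k α δ Ω u P) (hk : 1 ≤ k)
    (hα : 0 ≤ α) (hδ : 0 ≤ δ) (hQ : Q.IsHomogeneous (k + 1)) (hdvd : X (lastIdx n) ∣ Q)
    (hPQ : plap Q + P = 0) (hK : pnorm Q ≤ K) :
    AlmostFlatSolution α δ Ω fun x => (1 + K)⁻¹ * (u x - peval Q x) := by
  have hK0 : 0 ≤ K := (pnorm_nonneg Q).trans hK
  have hk1 : (1 : ℝ) ≤ k := Nat.one_le_cast.2 hk
  have habs : ∀ {t M : ℝ}, |t| ≤ (1 + K) * M → |(1 + K)⁻¹ * t| ≤ M := fun {t M} ht => by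
    rwa [abs_mul, abs_of_pos (by positivity), inv_mul_le_iff₀ (by positivity)]
  have hflat := H.isNearlyFlat hα hδ
  refine ⟨hflat, continuousOn_const.mul
    (H.continuousOn.sub (continuous_peval Q).continuousOn), fun x hx => ?_, fun x hx => ?_,
    fun x hx => ?_⟩
  all_goals have hx1 : ‖x‖ < 1 := mem_ball_zero_iff.1 hx.2
  · obtain ⟨L, hL, hLx⟩ := H.exists_hasLaplacianAt x hx
    refine ⟨_, habs ?_, (hLx.sub (hasLaplacianAt_peval Q x)).const_mul _⟩
    rw [eq_neg_of_add_eq_zero_left hPQ, peval_neg, sub_neg_eq_add]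
    have hrpow : ‖x‖ ^ ((k : ℝ) - 2 + α) ≤ ‖x‖ ^ (α - 1) :=
      Real.rpow_le_rpow_of_exponent_ge (H.norm_pos hx.1) hx1.le (by linarith)
    calc |L + peval P x| ≤ δ * ‖x‖ ^ (α - 1) := hL.trans (by gcongr)
      _ ≤ (1 + K) * (δ * ‖x‖ ^ (α - 1)) := le_mul_of_one_le_left (by positivity) (by linarith)
  · have hQx : |peval Q x| ≤ K * 1 :=
      (abs_peval_le_of_isHomogeneous hQ x).trans
        (mul_le_mul hK (pow_le_one₀ (norm_nonneg _) hx1.le) (by positivity) hK0)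
    exact habs (by linarith [abs_sub (u x) (peval Q x), H.abs_le_one x hx])
  · have hQx : |peval Q x| ≤ K * δ :=
      (abs_peval_le_of_X_dvd hdvd hx1.le).trans
        (mul_le_mul hK (hflat.abs_xn_le hx.1 hx1) (abs_nonneg _) hK0)
    have hux : |u x| ≤ δ := (H.abs_le_of_mem_frontier x hx).trans
      (mul_le_of_le_one_right hδ (Real.rpow_le_one (norm_nonneg _) hx1.le (by positivity)))
    exact habs (by linarith [abs_sub (u x) (peval Q x)])

theorem abs_normalized_sub_form_le (H : PolynomialSourceSolution k α δ Ω u P) (hα : α ≤ 1)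
    (hQ : Q.IsHomogeneous (k + 1)) (hK : pnorm Q ≤ K)
    (hu : ∀ x ∈ Ω ∩ ball (0 : En n) 1, |u x| ≤ N * ‖x‖ ^ ((k : ℝ) + α)) :
    ∀ x ∈ Ω ∩ ball (0 : En n) 1,
      |(1 + K)⁻¹ * (u x - peval Q x)| ≤ (N + K) * ‖x‖ ^ ((k : ℝ) + α) := by
  intro x hx
  have hK0 : 0 ≤ K := (pnorm_nonneg Q).trans hK
  have hpow : ‖x‖ ^ (k + 1) ≤ ‖x‖ ^ ((k : ℝ) + α) := by
    rw [← Real.rpow_natCast, Nat.cast_succ]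
    exact Real.rpow_le_rpow_of_exponent_ge (H.norm_pos hx.1) (mem_ball_zero_iff.1 hx.2).le
      (by linarith)
  have hQx : |peval Q x| ≤ K * ‖x‖ ^ ((k : ℝ) + α) :=
    (abs_peval_le_of_isHomogeneous hQ x).trans (mul_le_mul hK hpow (by positivity) hK0)
  rw [abs_mul, abs_of_pos (by positivity)]
  refine (mul_le_of_le_one_left (abs_nonneg _) (inv_le_one_of_one_le₀ (by linarith))).trans ?_
  linarith [abs_sub (u x) (peval Q x), hu x hx]

theorem exists_form_near (H : PolynomialSourceSolution k α δ Ω u P) (hn : 2 ≤ n) (hk : 1 ≤ k)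
    (hα0 : 0 < α) (hα1 : α ≤ 1) (hδ0 : 0 < δ) (hδ1 : δ ≤ 1) {s η : ℝ} (hs0 : 0 < s)
    (hs : s ≤ 1 / 2) (hN : 1 ≤ N) (hη : η ≤ 3 / 4 / 2 ^ (k + 2))
    (hδs : approxConst n * δ ≤ s ^ ((k : ℝ) + α))
    (hu : ∀ x ∈ Ω ∩ ball (0 : En n) 1, |u x| ≤ N * ‖x‖ ^ ((k : ℝ) + α)) :
    ∃ Q : MvPolynomial (Fin n) ℝ, Q.IsHomogeneous (k + 1) ∧ X (lastIdx n) ∣ Q ∧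
      (∀ x ∈ Ω ∩ ball (0 : En n) η, |u x - peval Q x|
        ≤ (1 + particularConst n (k - 1)) * (approxConst n * δ
          + formConst n k * (N + particularConst n (k - 1)) * s ^ α
          + formConst n k * η ^ (k + 2))) ∧
      pnorm Q ≤ (1 + particularConst n (k - 1)) * formConst n k + particularConst n (k - 1) ∧
      plap Q + P = 0 := by
  have hK0 : 0 ≤ particularConst n (k - 1) := particularConst_nonneg _
  set K := particularConst n (k - 1)
  have hK1 : 0 < 1 + K := by positivity
  obtain ⟨Q, hQ, hQdvd, hPQ, hQnorm⟩ :=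
    exists_isHomogeneous_plap_add_eq_zero (lastIdx n) H.isHomogeneous
  rw [show k - 1 + 2 = k + 1 by lia] at hQ
  replace hQnorm : pnorm Q ≤ K := hQnorm.trans (mul_le_of_le_one_right hK0 H.pnorm_le_one)
  obtain ⟨q, hq, hnear⟩ := (H.almostFlatSolution_sub_form hk hα0.le hδ0.le hQ hQdvd hPQ
    hQnorm).exists_form_near hn hα0 hδ0 hδ1 hs0 hs (by linarith) hδs
    (H.abs_normalized_sub_form_le hα1 hQ hQnorm hu)
  refine ⟨C (1 + K) * q + Q, ?_, dvd_add (hq.X_dvd.mul_left _) hQdvd, fun x hx => ?_, ?_, ?_⟩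
  · simpa using ((isHomogeneous_C (Fin n) (1 + K)).mul hq.isHomogeneous).add (by simpa using hQ)
  · have hxη : ‖x‖ < η := mem_ball_zero_iff.1 hx.2
    have hdecomp : u x - peval (C (1 + K) * q + Q) x
        = (1 + K) * ((1 + K)⁻¹ * (u x - peval Q x) - peval q x) := by
      rw [peval_add, peval_mul, peval_C, mul_sub, mul_inv_cancel_left₀ hK1.ne']
      ring
    rw [hdecomp, abs_mul, abs_of_pos hK1]
    gcongr
    refine (hnear x hx.1 (hxη.le.trans hη)).trans ?_
    have := formConst_nonneg n k
    gcongr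
  · refine (pnorm_add_le _ _).trans ?_
    rw [pnorm_C_mul, abs_of_pos hK1]
    gcongr
    exact hq.pnorm_le
  · rw [plap_add, plap_C_mul, hq.plap_eq_zero, mul_zero, zero_add, hPQ]

end PolynomialSourceSolution

end FormCorrection

theorem PolynomialSourceSolution.of_solution {k : ℕ} {α δ : ℝ} {Ω : Set (En n)}
    {u f g : En n → ℝ} {P : MvPolynomial (Fin n) ℝ} (hΩ : IsOpen Ω) (h0 : (0 : En n) ∈ frontier Ω)
    (hP : P.IsHomogeneous (k - 1)) (hPnorm : pnorm P ≤ 1)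
    (hcont : ContinuousOn u (closure Ω ∩ ball 0 1))
    (hsol : ∀ x ∈ Ω ∩ ball (0 : En n) 1, DifferentiableAt ℝ u x ∧
      DifferentiableAt ℝ (fderiv ℝ u) x ∧ lapAt u x + peval P x = f x)
    (hbdry : ∀ x ∈ frontier Ω ∩ ball (0 : En n) 1, u x = g x)
    (hu : ∀ x ∈ Ω ∩ ball (0 : En n) 1, |u x| ≤ 1)
    (hf : ∀ x ∈ Ω ∩ ball (0 : En n) 1, |f x| ≤ δ * ‖x‖ ^ ((k : ℝ) - 2 + α))
    (hg : ∀ x ∈ frontier Ω ∩ ball (0 : En n) 1, |g x| ≤ δ * ‖x‖ ^ ((k : ℝ) + α))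
    (hflat : Domain1α α δ Ω) : PolynomialSourceSolution k α δ Ω u P where
  isOpen := hΩ
  zero_notMem h := h0.2 (hΩ.interior_eq.symm ▸ h)
  flat := hflat
  isHomogeneous := hP
  pnorm_le_one := hPnorm
  continuousOn := hcont
  exists_hasLaplacianAt x hx :=
    ⟨lapAt u x, (hsol x hx).2.2 ▸ hf x hx, hasLaplacianAt_lapAt (hΩ.inter isOpen_ball) hx
      (fun y hy => (hsol y hy).1) (hsol x hx).2.1⟩
  abs_le_one := hu
  abs_le_of_mem_frontier x hx := hbdry x hx ▸ hg x hx

theorem stmt_9_general (n : ℕ) [NeZero n] (hn : 2 ≤ n) (k : ℕ) (hk : 1 ≤ k) :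
    ∃ C₀ : ℝ, 0 < C₀ ∧
      ∀ α : ℝ, 0 < α → α < 1 →
        ∃ η δ : ℝ, 0 < η ∧ η < 1 ∧ 0 < δ ∧
          ∀ (Ω : Set (En n)) (u f g : En n → ℝ) (P : MvPolynomial (Fin n) ℝ) (Ku : ℝ),
            IsOpen Ω → (0 : En n) ∈ frontier Ω → P.IsHomogeneous (k - 1) → pnorm P ≤ 1 →
            ContinuousOn u (closure Ω ∩ ball 0 1) →
            (∀ x ∈ Ω ∩ ball (0 : En n) 1,
              DifferentiableAt ℝ u x ∧ DifferentiableAt ℝ (fderiv ℝ u) x ∧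
              lapAt u x + peval P x = f x) →
            (∀ x ∈ frontier Ω ∩ ball (0 : En n) 1, u x = g x) →
            (∀ x ∈ Ω ∩ ball (0 : En n) 1, |u x| ≤ Ku * ‖x‖ ^ ((k : ℝ) + α)) →
            (∀ x ∈ Ω ∩ ball (0 : En n) 1, |u x| ≤ 1) →
            (∀ x ∈ Ω ∩ ball (0 : En n) 1, |f x| ≤ δ * ‖x‖ ^ ((k : ℝ) - 2 + α)) →
            (∀ x ∈ frontier Ω ∩ ball (0 : En n) 1, |g x| ≤ δ * ‖x‖ ^ ((k : ℝ) + α)) →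
            Domain1α α δ Ω →
            ∃ Q : MvPolynomial (Fin n) ℝ, Q.IsHomogeneous (k + 1) ∧ substLast 0 Q = 0 ∧
              (∀ x ∈ Ω ∩ ball (0 : En n) η, |u x - peval Q x| ≤ η ^ ((k : ℝ) + 1 + α)) ∧
              pnorm Q ≤ C₀ ∧
              plap Q + P = 0 := by
  have hK : 0 ≤ particularConst n (k - 1) := particularConst_nonneg _
  set K := particularConst n (k - 1)
  have hF : 0 ≤ formConst n k := formConst_nonneg n k
  refine ⟨(1 + K) * formConst n k + K + 1, by positivity, fun α hα0 hα1 => ?_⟩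
  obtain ⟨δ₁, N, hδ₁, hN, hdecay⟩ := exists_universal_decay hn hk hα0 hα1
  obtain ⟨η, ⟨hη0, hη⟩, s, ⟨hs0, hs⟩, δ, ⟨hδ0, hδ⟩, hδs, herror⟩ :=
    exists_approximation_parameters hα0 hα1 (b := 3 / 4 / 2 ^ (k + 2)) (by positivity)
      (c := 1 + K) (by positivity) (lt_min one_pos hδ₁) (k + 1) (k + α) (approxConst n)
      (formConst n k * (N + K)) (formConst n k)
  obtain ⟨hδ1, hδδ₁⟩ := le_min_iff.1 hδ
  have hη1 : η < 1 := hη.trans_lt <|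
    (div_le_self (by norm_num) (one_le_pow₀ one_le_two)).trans_lt (by norm_num)
  refine ⟨η, δ, hη0, hη1, hδ0, fun Ω u f g P Ku hΩ h0 hP hPnorm hcont hsol hbdry hKu hu hf hg
    hflat => ?_⟩
  have H := PolynomialSourceSolution.of_solution hΩ h0 hP hPnorm hcont hsol hbdry hu hf hg hflat
  have hNu := hdecay δ Ku Ω u hδ0.le hδδ₁ (H.decayingDataSolution hk hα1.le hδ1) hKu
  obtain ⟨Q, hQ, hdvd, hnear, hQnorm, hPQ⟩ :=
    H.exists_form_near hn hk hα0 hα1.le hδ0 hδ1 hs0 hs hN hη hδs hNu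
  rw [Nat.cast_succ] at herror
  exact ⟨Q, hQ, substLast_zero_of_X_dvd hdvd, fun x hx => (hnear x hx).trans herror,
    hQnorm.trans (le_add_of_nonneg_right zero_le_one), hPQ⟩

/-- Lemma 2.3: the key approximation step for the Dirichlet problem: `u` is
approximated at scale `η` by a `(k+1)`-form `Q` with `ΔQ + P ≡ 0`. -/
theorem stmt_9 (n : ℕ) [NeZero n] (hn : 2 ≤ n) (k : ℕ) (hk : 1 ≤ k) :
    ∃ C₀ : ℝ, 0 < C₀ ∧
      ∀ α : ℝ, 0 < α → α < 1 →
        ∃ η δ : ℝ, 0 < η ∧ η < 1 ∧ 0 < δ ∧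
          ∀ (Ω : Set (En n)) (u f g : En n → ℝ) (P : MvPolynomial (Fin n) ℝ) (Ku : ℝ),
            IsOpen Ω → IsConnected Ω → IsBounded Ω → (0 : En n) ∈ frontier Ω →
            -- `P` is a homogeneous polynomial of degree `k-1` with `‖P‖ ≤ 1`
            P.IsHomogeneous (k - 1) → pnorm P ≤ 1 →
            -- `u` solves `Δu + P = f` in `Ω∩B₁`, `u = g` on `∂Ω∩B₁`
            ContinuousOn u (closure Ω ∩ ball 0 1) →
            (∀ x ∈ Ω ∩ ball (0 : En n) 1,
              DifferentiableAt ℝ u x ∧ DifferentiableAt ℝ (fderiv ℝ u) x ∧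
              lapAt u x + peval P x = f x) →
            (∀ x ∈ frontier Ω ∩ ball (0 : En n) 1, u x = g x) →
            -- `u ∈ C^{k,α}(0)` with `u(0) = |Du(0)| = ⋯ = |D^k u(0)| = 0`
            (∀ x ∈ Ω ∩ ball (0 : En n) 1, |u x| ≤ Ku * ‖x‖ ^ ((k : ℝ) + α)) →
            -- `‖u‖_{L^∞(Ω∩B₁)} ≤ 1`
            (∀ x ∈ Ω ∩ ball (0 : En n) 1, |u x| ≤ 1) →
            -- smallness of data
            (∀ x ∈ Ω ∩ ball (0 : En n) 1, |f x| ≤ δ * ‖x‖ ^ ((k : ℝ) - 2 + α)) →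
            (∀ x ∈ frontier Ω ∩ ball (0 : En n) 1, |g x| ≤ δ * ‖x‖ ^ ((k : ℝ) + α)) →
            Domain1α α δ Ω →
            -- conclusion
            ∃ Q : MvPolynomial (Fin n) ℝ, Q.IsHomogeneous (k + 1) ∧ substLast 0 Q = 0 ∧
              (∀ x ∈ Ω ∩ ball (0 : En n) η, |u x - peval Q x| ≤ η ^ ((k : ℝ) + 1 + α)) ∧
              pnorm Q ≤ C₀ ∧
              plap Q + P = 0 := by
  obtain ⟨C₀, hC₀, h⟩ := stmt_9_general n hn k hk
  refine ⟨C₀, hC₀, fun α hα0 hα1 => ?_⟩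
  obtain ⟨η, δ, hη0, hη1, hδ, h⟩ := h α hα0 hα1
  exact ⟨η, δ, hη0, hη1, hδ, fun Ω u f g P Ku hΩ _ _ => h Ω u f g P Ku hΩ⟩
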